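/- arXiv:1707.04778 — 3 statements merged into one kernel-verified Lean document; each statement's English description precedes it below -/
import Mathlib

section
/- Let X be a Polish space, Ω = C([0,∞) → X) with the compact-open topology, ℱ its Borel σ-algebra, (ℱ_t) the natural filtration, θ_s the shift, Ω_x = {w : w(0)=x}, and 𝒫 the space of Borel probability measures on Ω with the weak topology. Let 𝒞 : X → 2^𝒫 satisfy: (C1) 𝒞(x) is a nonempty compact convex subset of 𝒫 for every x; (C2) {x ∈ X : 𝒞(x) ∩ K ≠ ∅} is Borel for every closed K ⊆ 𝒫; (C3) P(Ω_x) = 1 for every P ∈ 𝒞(x); (MP1) for every x, P ∈ 𝒞(x), and s ≥ 0, the regular conditional probability satisfies P[θ_s^{-1}(·)|ℱ_s](w) ∈ 𝒞(w(s)) for P-almost all w; (MP2) for every s ≥ 0 and every ℱ_s-measurable selection Q of w ↦ 𝒞(w(s)), if P ∈ 𝒞(x) then P ⊗_s Q ∈ 𝒞(x). Then there exists a measurable selection x ↦ P_x ∈ 𝒞(x) such that for every x and every s ≥ 0, P_x[θ_s^{-1}(·)|ℱ_s](w) = P_{w(s)}(·) for P_x-almost all w. -/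
open MeasureTheory Set
open scoped NNReal

noncomputable section

/-- The space `Ω = C([0,∞) → X)` with the compact-open topology. -/
abbrev IPath (X : Type*) [TopologicalSpace X] : Type _ := C(ℝ≥0, X)

variable {X : Type*} [TopologicalSpace X]

/-- The shift `θ_s : w(·) ↦ w(s + ·)`. -/
def shift (s : ℝ≥0) (w : IPath X) : IPath X :=
  w.comp ⟨fun t => s + t, by fun_prop⟩

/-- The Borel σ-algebra `ℱ` on the path space. -/
instance : MeasurableSpace (IPath X) := borel _
instance : BorelSpace (IPath X) := ⟨rfl⟩

/-- The natural filtration `ℱ_s` on path space. -/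
def natF (X : Type*) [TopologicalSpace X] [MeasurableSpace X] (s : ℝ≥0) :
    MeasurableSpace (IPath X) :=
  ⨆ t ∈ Iic s, MeasurableSpace.comap (fun w : IPath X => w t) inferInstance

/-- Convexity of a set of probability measures: it is stable under convex
combinations `a • P + b • Q`, `a + b = 1`. -/
def ConvexMeasSet {Ω' : Type*} [MeasurableSpace Ω']
    (C : Set (ProbabilityMeasure Ω')) : Prop :=
  ∀ P ∈ C, ∀ Q ∈ C, ∀ a b : ℝ≥0, a + b = 1 →
    ∀ R : ProbabilityMeasure Ω',
      (R : Measure Ω') = a • (P : Measure Ω') + b • (Q : Measure Ω') → R ∈ C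

/-!
Choose countably many bounded continuous `f_m` on `X` whose integrals determine a measure, and
maximise the functionals `P ↦ E_P ∫ e^{-kt} f_m(w t) dt`, `k ≥ 1`, one after the other over `𝒞(x)`.
Because the exponential distribution has no memory, such a functional splits at any time `s` into a
part depending on the past and a positive multiple of the same functional of the shifted path; so a
measure is optimal only if its conditional distributions are, and optimality survives `⊗_s`. Hence
the maximisers again satisfy (MP1) and (MP2), and compactness carries this over to the intersection
of all the successive sets of maximisers. By uniqueness of Laplace transforms its elements starting
at `x` have the same one-dimensional marginals, and conditioning with (MP1) extends this to all
finite-dimensional distributions. The intersection is therefore a single measure `P_x`, for which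
(MP1) is the Markov property.
-/

section CompactMultifunction

variable {Y T : Type*}

/-- The multifunction of maximisers of `φ` over the values of `C`. -/
def argmaxOn (C : Y → Set T) (φ : T → ℝ) (x : Y) : Set T :=
  {p ∈ C x | ∀ q ∈ C x, φ q ≤ φ p}

/-- Successive maximisation of `φ 0`, `φ 1`, … over the values of `C`: each functional is maximised
over the maximisers of the previous ones. -/
def iterArgmax (C : Y → Set T) (φ : ℕ → T → ℝ) : ℕ → Y → Set T
  | 0 => C
  | n + 1 => argmaxOn (iterArgmax C φ n) (φ n)

lemma antitone_iterArgmax (C : Y → Set T) (φ : ℕ → T → ℝ) :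
    Antitone (iterArgmax C φ) :=
  antitone_nat_of_succ_le fun _ _ _ hp => hp.1

lemma apply_eq_of_mem_iInter_iterArgmax {C : Y → Set T} {φ : ℕ → T → ℝ} {x : Y}
    {p q : T} (hp : p ∈ ⋂ n, iterArgmax C φ n x) (hq : q ∈ ⋂ n, iterArgmax C φ n x) (n : ℕ) :
    φ n p = φ n q := by
  rw [mem_iInter] at hp hq
  exact le_antisymm ((hq (n + 1)).2 p (hp n)) ((hp (n + 1)).2 q (hq n))

variable [TopologicalSpace T]

lemma argmaxOn_inter_nonempty_iff {C : Y → Set T} {x : Y} (hne : (C x).Nonempty)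
    (hcpt : IsCompact (C x)) {φ : T → ℝ} (hφ : Continuous φ) {K : Set T} (hK : IsClosed K) :
    (argmaxOn C φ x ∩ K).Nonempty ↔
      ∀ r : ℚ, (C x ∩ {p | r ≤ φ p}).Nonempty → (C x ∩ (K ∩ {p | r ≤ φ p})).Nonempty := by
  constructor
  · rintro ⟨p, ⟨hp, hmax⟩, hpK⟩ r ⟨q, hq, hrq⟩
    exact ⟨p, hp, hpK, hrq.trans (hmax q hq)⟩
  intro h
  obtain ⟨m, hm, hmmax⟩ := hcpt.exists_isMaxOn hne hφ.continuousOn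
  have hKne : (C x ∩ K).Nonempty := by
    obtain ⟨r, hr⟩ := exists_rat_lt (φ m)
    obtain ⟨p, hp, hpK, -⟩ := h r ⟨m, hm, hr.le⟩
    exact ⟨p, hp, hpK⟩
  obtain ⟨p, ⟨hp, hpK⟩, hpmax⟩ := (hcpt.inter_right hK).exists_isMaxOn hKne hφ.continuousOn
  suffices hmp : φ m ≤ φ p from ⟨p, ⟨hp, fun q hq => (hmmax hq).trans hmp⟩, hpK⟩
  by_contra! hpm
  obtain ⟨r, hpr, hrm⟩ := exists_rat_btwn hpm
  obtain ⟨q, hq, hqK, hrq⟩ := h r ⟨m, hm, hrm.le⟩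
  exact absurd (hpmax ⟨hq, hqK⟩) (hpr.trans_le hrq).not_ge

variable [MeasurableSpace Y]

/-- A measurable multifunction with nonempty compact values. Measurability is in the sense of the
hitting sets of closed sets. -/
structure IsCompactMultifunction (C : Y → Set T) : Prop where
  nonempty : ∀ x, (C x).Nonempty
  isCompact : ∀ x, IsCompact (C x)
  measurableSet_hit : ∀ K, IsClosed K → MeasurableSet {x | (C x ∩ K).Nonempty}

namespace IsCompactMultifunction

lemma argmax {C : Y → Set T} (hC : IsCompactMultifunction C) {φ : T → ℝ} (hφ : Continuous φ) :
    IsCompactMultifunction (argmaxOn C φ) where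
  nonempty x :=
    let ⟨p, hp, hmax⟩ := (hC.isCompact x).exists_isMaxOn (hC.nonempty x) hφ.continuousOn
    ⟨p, hp, fun _ hq => hmax hq⟩
  isCompact x := by
    have hinter : argmaxOn C φ x = C x ∩ ⋂ q ∈ C x, {p | φ q ≤ φ p} := by
      ext p
      simp [argmaxOn]
    rw [hinter]
    exact (hC.isCompact x).inter_right
      (isClosed_biInter fun q _ => isClosed_le continuous_const hφ)
  measurableSet_hit K hK := by
    have hclosed (r : ℚ) : IsClosed {p | (r : ℝ) ≤ φ p} := isClosed_le continuous_const hφ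
    simp_rw [argmaxOn_inter_nonempty_iff (hC.nonempty _) (hC.isCompact _) hφ hK, imp_iff_not_or,
      ofPred_forall]
    exact .iInter fun r => (hC.measurableSet_hit _ (hclosed r)).compl.union
      (hC.measurableSet_hit _ (hK.inter (hclosed r)))

lemma iInter [T2Space T] {C : ℕ → Y → Set T} (hC : ∀ n, IsCompactMultifunction (C n))
    (hanti : Antitone C) : IsCompactMultifunction fun x => ⋂ n, C n x := by
  have hit (x : Y) {K : Set T} (hK : IsClosed K) :
      ((⋂ n, C n x) ∩ K).Nonempty ↔ ∀ n, (C n x ∩ K).Nonempty := by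
    refine ⟨fun h n => h.mono (inter_subset_inter_left _ (iInter_subset _ n)), fun h => ?_⟩
    rw [iInter_inter]
    have hcpt (n : ℕ) : IsCompact (C n x ∩ K) := ((hC n).isCompact x).inter_right hK
    exact IsCompact.nonempty_iInter_of_sequence_nonempty_isCompact_isClosed _
      (fun n => inter_subset_inter_left _ (hanti n.le_succ x)) h (hcpt 0) fun n => (hcpt n).isClosed
  constructor
  · exact fun x => by simpa using (hit x isClosed_univ).2 fun n => by simpa using (hC n).nonempty x
  · exact fun x => ((hC 0).isCompact x).of_isClosed_subset
      (isClosed_iInter fun n => ((hC n).isCompact x).isClosed) (iInter_subset _ 0)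
  · intro K hK
    simp_rw [hit _ hK, ofPred_forall]
    exact .iInter fun n => (hC n).measurableSet_hit K hK

lemma iInter_iterArgmax [T2Space T] {C : Y → Set T} (hC : IsCompactMultifunction C)
    {φ : ℕ → T → ℝ} (hφ : ∀ n, Continuous (φ n)) :
    IsCompactMultifunction fun x => ⋂ n, iterArgmax C φ n x := by
  refine iInter (fun n => ?_) (antitone_iterArgmax C φ)
  induction n with
  | zero => exact hC
  | succ n ih => exact ih.argmax (hφ n)

lemma measurable_of_subsingleton {C : Y → Set T} (hC : IsCompactMultifunction C)
    (hsub : ∀ x, (C x).Subsingleton) {sel : Y → T} (hsel : ∀ x, sel x ∈ C x) :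
    Measurable[_, borel T] sel := by
  refine @measurable_generateFrom _ _ _ _ _ fun U hU => ?_
  have hpre : sel ⁻¹' U = {x | (C x ∩ Uᶜ).Nonempty}ᶜ := by
    ext x
    simp [(hsub x).eq_singleton_of_mem (hsel x)]
  rw [hpre]
  exact (hC.measurableSet_hit _ (IsOpen.isClosed_compl hU)).compl

lemma exists_measurable_selection [T2Space T] {C : Y → Set T} (hC : IsCompactMultifunction C)
    {φ : ℕ → T → ℝ} (hφ : ∀ n, Continuous (φ n)) (hsep : ∀ p q, (∀ n, φ n p = φ n q) → p = q) :
    ∃ sel : Y → T, Measurable[_, borel T] sel ∧ ∀ x, sel x ∈ C x := by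
  have hlast := hC.iInter_iterArgmax hφ
  choose sel hsel using hlast.nonempty
  exact ⟨sel, hlast.measurable_of_subsingleton
    (fun x p hp q hq => hsep p q (apply_eq_of_mem_iInter_iterArgmax hp hq)) hsel,
    fun x => mem_iInter.1 (hsel x) 0⟩

end IsCompactMultifunction

end CompactMultifunction

section MeasureDetermining

variable {Y : Type*} [TopologicalSpace Y]

lemma exists_seq_isClosed_isPiSystem_borel_eq_generateFrom (Y : Type*) [TopologicalSpace Y]
    [SecondCountableTopology Y] : ∃ F : ℕ → Set Y, (∀ n, IsClosed (F n)) ∧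
      IsPiSystem (range F) ∧ borel Y = MeasurableSpace.generateFrom (range F) := by
  classical
  have hB := TopologicalSpace.isBasis_countableBasis Y
  obtain ⟨e, he⟩ := exists_surjective_nat (Finset (TopologicalSpace.countableBasis Y))
  have hclosed (n : ℕ) : IsClosed (⋂ b ∈ e n, (b : Set Y)ᶜ) :=
    isClosed_biInter fun b _ => (hB.isOpen b.2).isClosed_compl
  refine ⟨fun n => ⋂ b ∈ e n, (b : Set Y)ᶜ, hclosed, ?_, le_antisymm ?_ ?_⟩
  · rintro _ ⟨m, rfl⟩ _ ⟨n, rfl⟩ -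
    obtain ⟨k, hk⟩ := he (e m ∪ e n)
    exact ⟨k, by simp only [hk, Finset.mem_union, iInter_or, iInter_inter_distrib]⟩
  · rw [hB.borel_eq_generateFrom]
    refine MeasurableSpace.generateFrom_le fun b hb => ?_
    obtain ⟨n, hn⟩ := he {⟨b, hb⟩}
    exact .of_compl (MeasurableSpace.measurableSet_generateFrom ⟨n, by simp [hn]⟩)
  · rw [borel_eq_generateFrom_isClosed]
    exact MeasurableSpace.generateFrom_mono (range_subset_iff.2 hclosed)

/-- A sequence of bounded continuous functions whose integrals determine a probability measure. -/
def IsMeasureDetermining [MeasurableSpace Y] (f : ℕ → BoundedContinuousFunction Y ℝ) : Prop :=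
  ∀ ⦃μ ν : Measure Y⦄ [IsProbabilityMeasure μ] [IsProbabilityMeasure ν],
    (∀ n, ∫ y, f n y ∂μ = ∫ y, f n y ∂ν) → μ = ν

variable [HasOuterApproxClosed Y]

/-- The sequence `hF.apprSeq` of continuous outer approximations of the indicator of a closed set
`F`, with values in `ℝ` instead of `ℝ≥0`. -/
def realApprSeq {F : Set Y} (hF : IsClosed F) (n : ℕ) : BoundedContinuousFunction Y ℝ :=
  ⟨⟨fun y => hF.apprSeq n y, by fun_prop⟩, (hF.apprSeq n).map_bounded'⟩

variable [MeasurableSpace Y]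

lemma tendsto_integral_realApprSeq [OpensMeasurableSpace Y] {F : Set Y} (hF : IsClosed F)
    (μ : Measure Y) [IsFiniteMeasure μ] :
    Filter.Tendsto (fun n => ∫ y, realApprSeq hF n y ∂μ) Filter.atTop (nhds (μ.real F)) := by
  have h := (ENNReal.tendsto_toReal (measure_ne_top μ F)).comp
    (HasOuterApproxClosed.tendsto_lintegral_apprSeq hF μ)
  exact h.congr fun n => (hF.apprSeq n).toReal_lintegral_coe_eq_integral μ

lemma exists_isMeasureDetermining (Y : Type*) [TopologicalSpace Y] [SecondCountableTopology Y]
    [HasOuterApproxClosed Y] [MeasurableSpace Y] [BorelSpace Y] :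
    ∃ f : ℕ → BoundedContinuousFunction Y ℝ, IsMeasureDetermining f := by
  obtain ⟨F, hF, hpi, hgen⟩ := exists_seq_isClosed_isPiSystem_borel_eq_generateFrom Y
  refine ⟨fun n => realApprSeq (hF n.unpair.1) n.unpair.2, fun μ ν _ _ h => ?_⟩
  refine ext_of_generate_finite (range F) (BorelSpace.measurable_eq.trans hgen) hpi ?_ (by simp)
  rintro _ ⟨k, rfl⟩
  have hreal : μ.real (F k) = ν.real (F k) := by
    refine tendsto_nhds_unique (tendsto_integral_realApprSeq (hF k) μ) ?_
    refine (tendsto_integral_realApprSeq (hF k) ν).congr fun n => ?_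
    simpa using (h (Nat.pair k n)).symm
  exact (measureReal_eq_measureReal_iff).1 hreal

lemma measurable_borel_coe_probabilityMeasure [BorelSpace Y] :
    Measurable[borel (ProbabilityMeasure Y)] fun P => (P : Measure Y) := by
  let _ : MeasurableSpace (ProbabilityMeasure Y) := borel _
  have : BorelSpace (ProbabilityMeasure Y) := ⟨rfl⟩
  refine Measurable.measure_of_isPiSystem_of_isProbabilityMeasure
    (BorelSpace.measurable_eq.trans borel_eq_generateFrom_isClosed) isPiSystem_isClosed
    fun F (hF : IsClosed F) => measurable_of_tendsto_metrizable
      (fun n => (ProbabilityMeasure.continuous_lintegral_boundedContinuousFunction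
        (hF.apprSeq n)).measurable)
      (tendsto_pi_nhds.2 fun P => HasOuterApproxClosed.tendsto_lintegral_apprSeq hF _)

lemma IsCompactMultifunction.exists_measurable_selection_probabilityMeasure
    [SecondCountableTopology Y] [BorelSpace Y] {Z : Type*} [MeasurableSpace Z]
    {C : Z → Set (ProbabilityMeasure Y)} (hC : IsCompactMultifunction C) :
    ∃ sel : Z → ProbabilityMeasure Y, Measurable[_, borel _] sel ∧ ∀ z, sel z ∈ C z := by
  obtain ⟨f, hf⟩ := exists_isMeasureDetermining Y
  exact hC.exists_measurable_selection
    (fun n => ProbabilityMeasure.continuous_integral_boundedContinuousFunction (f n))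
    fun P Q h => Subtype.ext (hf (μ := P.toMeasure) (ν := Q.toMeasure) h)

end MeasureDetermining

section PathSpace

instance polishSpace_continuousMap {Y : Type*} [TopologicalSpace Y] [SecondCountableTopology Y]
    [LocallyCompactSpace Y] [PolishSpace X] : PolishSpace C(Y, X) := by
  let _ := TopologicalSpace.upgradeIsCompletelyMetrizable X
  infer_instance

lemma shift_apply (s t : ℝ≥0) (w : IPath X) : shift s w t = w (s + t) := rfl

lemma measurable_shift (s : ℝ≥0) : Measurable (shift (X := X) s) :=
  (ContinuousMap.continuous_precomp _).measurable

/-- The path `w` stopped at time `s`. -/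
def stopPath (s : ℝ≥0) (w : IPath X) : IPath X :=
  w.comp ⟨fun t => min t s, by fun_prop⟩

lemma stopPath_apply (s t : ℝ≥0) (w : IPath X) : stopPath s w t = w (min t s) := rfl

open Classical in
/-- The path which follows `w` up to time `s` and `v` afterwards. If `w s ≠ v 0`, so that this is
not continuous, it is `w` by convention. -/
def glue (s : ℝ≥0) (w v : IPath X) : IPath X :=
  if h : w s = v 0 then
    ⟨fun t => if t ≤ s then w t else v (t - s),
      w.continuous.if_le (by fun_prop) continuous_id continuous_const (by rintro t rfl; simpa)⟩
  else w

lemma glue_apply_of_le {s t : ℝ≥0} (hts : t ≤ s) (w v : IPath X) : glue s w v t = w t := by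
  by_cases h : w s = v 0 <;> simp [glue, h, hts]

lemma stopPath_glue (s : ℝ≥0) (w v : IPath X) : stopPath s (glue s w v) = stopPath s w := by
  ext t
  exact glue_apply_of_le (min_le_right t s) w v

lemma shift_glue {s : ℝ≥0} {w v : IPath X} (h : w s = v 0) : shift s (glue s w v) = v := by
  ext t
  rcases eq_zero_or_pos t with rfl | ht
  · simp [shift_apply, glue_apply_of_le, h]
  · simp [shift_apply, glue, h, ht.ne']

variable [MeasurableSpace X]

lemma measurable_eval_natF {s t : ℝ≥0} (h : t ≤ s) :
    Measurable[natF X s] fun w : IPath X => w t :=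
  measurable_iff_comap_le.2 (le_iSup₂_of_le (f := fun t (_ : t ∈ Iic s) =>
    MeasurableSpace.comap (fun w : IPath X => w t) inferInstance) t h le_rfl)

variable [BorelSpace X]

lemma measurable_eval (t : ℝ≥0) : Measurable fun w : IPath X => w t :=
  (continuous_eval_const t).measurable

lemma natF_le (s : ℝ≥0) : natF X s ≤ borel (IPath X) :=
  iSup₂_le fun t _ => (measurable_eval t).comap_le

variable [PolishSpace X]

lemma measurable_of_measurable_eval {Ω : Type*} [MeasurableSpace Ω] {g : Ω → IPath X}
    (hg : ∀ t, Measurable fun a => g a t) : Measurable g := by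
  obtain ⟨D, hDc, hDd⟩ := TopologicalSpace.exists_countable_dense ℝ≥0
  have := hDc.to_subtype
  -- By the Lusin–Souslin theorem the evaluations at `D` generate the Borel σ-algebra.
  have hemb : MeasurableEmbedding fun (w : IPath X) (d : D) => w d := by
    refine Continuous.measurableEmbedding (by fun_prop) fun w v hwv => ?_
    exact DFunLike.coe_injective (w.continuous.ext_on hDd v.continuous
      fun d hd => congrFun hwv ⟨d, hd⟩)
  exact hemb.measurable_comp_iff.1 (measurable_pi_lambda _ fun d => hg d)

lemma measurable_stopPath_natF (s : ℝ≥0) : Measurable[natF X s] (stopPath (X := X) s) :=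
  @measurable_of_measurable_eval X _ _ _ _ _ (natF X s) _
    fun t => measurable_eval_natF (min_le_right t s)

lemma natF_eq_comap_stopPath (s : ℝ≥0) :
    natF X s = MeasurableSpace.comap (stopPath s) inferInstance := by
  refine le_antisymm (iSup₂_le fun t ht => ?_) (measurable_stopPath_natF s).comap_le
  have heval : (fun w : IPath X => w t) = (fun w : IPath X => w t) ∘ stopPath s := by
    ext w
    simp [stopPath_apply, min_eq_left (mem_Iic.1 ht)]
  rw [heval, ← MeasurableSpace.comap_comp]
  exact MeasurableSpace.comap_mono (measurable_eval t).comap_le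

lemma measurable_glue (s : ℝ≥0) : Measurable fun p : IPath X × IPath X => glue s p.1 p.2 := by
  classical
  refine measurable_of_measurable_eval fun t => ?_
  rcases le_or_gt t s with hts | hst
  · simp only [glue_apply_of_le hts]
    exact (measurable_eval t).comp measurable_fst
  · have hglue (p : IPath X × IPath X) :
        glue s p.1 p.2 t = if p.1 s = p.2 0 then p.2 (t - s) else p.1 t := by
      by_cases h : p.1 s = p.2 0 <;> simp [glue, h, hst]
    simp only [hglue]
    exact .ite (measurableSet_eq_fun ((measurable_eval s).comp measurable_fst)
        ((measurable_eval 0).comp measurable_snd))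
      ((measurable_eval (t - s)).comp measurable_snd) ((measurable_eval t).comp measurable_fst)

lemma borel_path_eq_comap_pi :
    borel (IPath X) = MeasurableSpace.comap (fun w t => w t) MeasurableSpace.pi := by
  refine le_antisymm ?_ (measurable_pi_lambda _ measurable_eval).comap_le
  have hid : Measurable[MeasurableSpace.comap (fun w t => w t) MeasurableSpace.pi]
      (id : IPath X → IPath X) :=
    @measurable_of_measurable_eval X _ _ _ _ _ (_) id
      fun t => (measurable_pi_apply t).comp (comap_measurable _)
  exact fun B hB => hid hB

lemma path_measure_ext {μ ν : Measure (IPath X)} [IsProbabilityMeasure μ] [IsProbabilityMeasure ν]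
    (h : ∀ A : ℝ≥0 → Set X, (∀ t, MeasurableSet (A t)) → ∀ S : Finset ℝ≥0,
      μ {w | ∀ t ∈ S, w t ∈ A t} = ν {w | ∀ t ∈ S, w t ∈ A t}) : μ = ν := by
  refine ext_of_generate_finite _ ?_ ((isPiSystem_squareCylinders
    (fun _ : ℝ≥0 => MeasurableSpace.isPiSystem_measurableSet (α := X))
    fun _ => MeasurableSet.univ).comap fun (w : IPath X) t => w t) ?_ (by simp)
  · rw [← image, ← MeasurableSpace.comap_generateFrom, generateFrom_squareCylinders]
    exact borel_path_eq_comap_pi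
  · rintro _ ⟨_, ⟨S, A, hA, rfl⟩, rfl⟩
    exact h A (fun t => hA t (mem_univ t)) S

end PathSpace

section Disintegration

open ProbabilityTheory

lemma ae_eq_of_forall_setLIntegral_apply_eq {Ω E : Type*} {m m₀ : MeasurableSpace Ω}
    [MeasurableSpace E] [MeasurableSpace.CountablyGenerated E] (hm : m ≤ m₀) {μ : Measure[m₀] Ω}
    [IsFiniteMeasure μ] {Q Q' : Ω → Measure E} [∀ ω, IsProbabilityMeasure (Q ω)]
    [∀ ω, IsProbabilityMeasure (Q' ω)] (hQ : Measurable[m] Q) (hQ' : Measurable[m] Q')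
    (h : ∀ A, MeasurableSet[m] A → ∀ B, MeasurableSet B →
      ∫⁻ ω in A, Q ω B ∂μ = ∫⁻ ω in A, Q' ω B ∂μ) :
    Q =ᵐ[μ] Q' := by
  let κ : @Kernel Ω E m _ := @Kernel.mk _ _ m _ Q hQ
  let κ' : @Kernel Ω E m _ := @Kernel.mk _ _ m _ Q' hQ'
  have : IsMarkovKernel κ := ⟨fun ω => inferInstanceAs (IsProbabilityMeasure (Q ω))⟩
  have : IsMarkovKernel κ' := ⟨fun ω => inferInstanceAs (IsProbabilityMeasure (Q' ω))⟩
  suffices hprod : (μ.trim hm).compProd κ = (μ.trim hm).compProd κ' from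
    ae_eq_of_ae_eq_trim (Kernel.ae_eq_of_compProd_eq hprod)
  refine Measure.ext_prod fun {A B} hA hB => ?_
  rw [Measure.compProd_apply_prod hA hB, Measure.compProd_apply_prod hA hB,
    setLIntegral_trim hm _ hA, setLIntegral_trim hm _ hA]
  · exact h A hA B hB
  · exact (Measure.measurable_coe hB).comp hQ'
  · exact (Measure.measurable_coe hB).comp hQ

lemma trim_eq_trim_of_forall_measure_eq {Ω : Type*} {m m₀ : MeasurableSpace Ω} (hm : m ≤ m₀)
    {μ ν : Measure[m₀] Ω} (h : ∀ A, MeasurableSet[m] A → μ A = ν A) : μ.trim hm = ν.trim hm :=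
  @Measure.ext _ m _ _ fun A hA => by
    rw [trim_measurableSet_eq _ hA, trim_measurableSet_eq _ hA, h A hA]

variable [MeasurableSpace X]

/-- `Q` is a regular conditional distribution of the shifted path given the past up to time `s`,
that is, `Q w = P[θ_s⁻¹(·) | ℱ_s](w)` for `P`-almost all `w`. -/
structure IsShiftDisintegration (s : ℝ≥0) (P : ProbabilityMeasure (IPath X))
    (Q : IPath X → ProbabilityMeasure (IPath X)) : Prop where
  measurable : Measurable[natF X s, borel _] Q
  measure_inter : ∀ A, MeasurableSet[natF X s] A → ∀ B, MeasurableSet B →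
    (P : Measure (IPath X)) (A ∩ shift s ⁻¹' B) = ∫⁻ w in A, (Q w : Measure (IPath X)) B ∂P

/-- `R = P ⊗_s Q`: the measure `R` agrees with `P` on `ℱ_s` and continues with `Q`. -/
structure IsConcat (s : ℝ≥0) (P : ProbabilityMeasure (IPath X))
    (Q : IPath X → ProbabilityMeasure (IPath X)) (R : ProbabilityMeasure (IPath X)) : Prop
    extends IsShiftDisintegration s R Q where
  measure_eq : ∀ A, MeasurableSet[natF X s] A →
    (R : Measure (IPath X)) A = (P : Measure (IPath X)) A

variable {s : ℝ≥0} {P R : ProbabilityMeasure (IPath X)}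
  {Q Q' : IPath X → ProbabilityMeasure (IPath X)}

lemma measurable_integral_natF (hQ : Measurable[natF X s, borel _] Q)
    (H : BoundedContinuousFunction (IPath X) ℝ) :
    Measurable[natF X s] fun w => ∫ v, H v ∂(Q w) :=
  @Measurable.comp _ _ _ (_) (borel _) (_) _ _
    (ProbabilityMeasure.continuous_integral_boundedContinuousFunction H).borel_measurable hQ

lemma IsConcat.integral_eq [BorelSpace X] (h : IsConcat s P Q R) {G : IPath X → ℝ}
    (hG : Measurable[natF X s] G) :
    ∫ w, G w ∂(R : Measure (IPath X)) = ∫ w, G w ∂P := by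
  have hGs := hG.stronglyMeasurable
  rw [integral_trim (natF_le s) hGs, integral_trim (natF_le s) hGs,
    trim_eq_trim_of_forall_measure_eq (natF_le s) h.measure_eq]

variable [PolishSpace X]

lemma measurable_coe_natF (hQ : Measurable[natF X s, borel _] Q) :
    Measurable[natF X s] fun w => (Q w : Measure (IPath X)) :=
  @Measurable.comp _ _ _ (_) (borel _) (_) _ _ measurable_borel_coe_probabilityMeasure hQ

variable [BorelSpace X]

/-- The Markov kernel given by an `ℱ_s`-measurable family of path measures. -/
def shiftKernel (hQ : Measurable[natF X s, borel _] Q) :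
    Kernel (IPath X) (IPath X) :=
  ⟨fun w => Q w, (measurable_coe_natF hQ).mono (natF_le s) le_rfl⟩

lemma shiftKernel_apply (hQ : Measurable[natF X s, borel _] Q) (w : IPath X) :
    shiftKernel hQ w = Q w := rfl

instance (hQ : Measurable[natF X s, borel _] Q) :
    IsMarkovKernel (shiftKernel hQ) :=
  ⟨fun w => (Q w).2⟩

namespace IsShiftDisintegration

lemma ae_eq (hQ : IsShiftDisintegration s P Q) (hQ' : IsShiftDisintegration s P Q') :
    Q =ᵐ[P.toMeasure] Q' := by
  have hmeas : (fun w => (Q w).toMeasure) =ᵐ[P.toMeasure] fun w => (Q' w).toMeasure :=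
    ae_eq_of_forall_setLIntegral_apply_eq (natF_le s) (measurable_coe_natF hQ.measurable)
      (measurable_coe_natF hQ'.measurable)
      fun A hA B hB => by rw [← hQ.measure_inter A hA B hB, hQ'.measure_inter A hA B hB]
  exact hmeas.mono fun w hw => Subtype.ext hw

lemma map_shift (hQ : IsShiftDisintegration s P Q) :
    P.toMeasure.map (shift s) = (P.toMeasure.compProd (shiftKernel hQ.measurable)).snd := by
  ext B hB
  rw [Measure.map_apply (measurable_shift s) hB, Measure.snd_apply hB, ← univ_prod,
    Measure.compProd_apply_prod .univ hB]
  simpa only [shiftKernel_apply, univ_inter] using hQ.measure_inter univ .univ B hB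

lemma integral_comp_shift (hQ : IsShiftDisintegration s P Q)
    (H : BoundedContinuousFunction (IPath X) ℝ) :
    ∫ w, H (shift s w) ∂P = ∫ w, ∫ v, H v ∂(Q w) ∂P := by
  have hH := H.continuous.stronglyMeasurable
  calc ∫ w, H (shift s w) ∂P = ∫ v, H v ∂(P.toMeasure.map (shift s)) :=
        (integral_map (measurable_shift s).aemeasurable hH.aestronglyMeasurable).symm
    _ = ∫ p, H p.2 ∂(P.toMeasure.compProd (shiftKernel hQ.measurable)) := by
        rw [hQ.map_shift, Measure.snd,
          integral_map measurable_snd.aemeasurable hH.aestronglyMeasurable]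
    _ = ∫ w, ∫ v, H v ∂(Q w) ∂P :=
        Measure.integral_compProd (.of_bound
          (hH.comp_measurable measurable_snd).aestronglyMeasurable ‖H‖
          (.of_forall fun p => H.norm_coe_le_norm p.2))

end IsShiftDisintegration

/-- The law of the path which follows a `P`-distributed path `w` up to time `s` and then a
`Q w`-distributed one. -/
def concatMeasure (P : ProbabilityMeasure (IPath X)) (hQ : Measurable[natF X s, borel _] Q) :
    ProbabilityMeasure (IPath X) :=
  ⟨(P.toMeasure.compProd (shiftKernel hQ)).map fun p => glue s p.1 p.2,
    Measure.isProbabilityMeasure_map (measurable_glue s).aemeasurable⟩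

lemma glue_preimage_of_measurableSet_natF {A : Set (IPath X)} (hA : MeasurableSet[natF X s] A) :
    (fun p : IPath X × IPath X => glue s p.1 p.2) ⁻¹' A = A ×ˢ univ := by
  rw [natF_eq_comap_stopPath] at hA
  obtain ⟨B, -, rfl⟩ := hA
  ext p
  simp [stopPath_glue]

lemma ae_eval_eq_eval_zero_compProd (P : ProbabilityMeasure (IPath X))
    (hQ : Measurable[natF X s, borel _] Q) (hstart : ∀ w, (Q w).toMeasure {v | v 0 = w s} = 1) :
    ∀ᵐ p ∂P.toMeasure.compProd (shiftKernel hQ), p.1 s = p.2 0 := by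
  have hmeas : MeasurableSet {p : IPath X × IPath X | p.1 s = p.2 0} :=
    measurableSet_eq_fun ((measurable_eval s).comp measurable_fst)
      ((measurable_eval 0).comp measurable_snd)
  refine (Measure.ae_compProd_iff hmeas).2 (.of_forall fun w => ?_)
  have hw : ∀ᵐ v ∂(Q w).toMeasure, v 0 = w s :=
    (mem_ae_iff_prob_eq_one (measurable_eval 0 (measurableSet_singleton (w s)))).2 (hstart w)
  exact hw.mono fun v hv => hv.symm

lemma concatMeasure_apply_natF (P : ProbabilityMeasure (IPath X))
    (hQ : Measurable[natF X s, borel _] Q) {A : Set (IPath X)} (hA : MeasurableSet[natF X s] A) :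
    (concatMeasure P hQ).toMeasure A = P.toMeasure A := by
  have hA' := natF_le s _ hA
  rw [concatMeasure, ProbabilityMeasure.coe_mk, Measure.map_apply (measurable_glue s) hA',
    glue_preimage_of_measurableSet_natF hA, Measure.compProd_apply_prod hA' .univ]
  simp

lemma isConcat_concatMeasure (P : ProbabilityMeasure (IPath X))
    (hQ : Measurable[natF X s, borel _] Q) (hstart : ∀ w, (Q w).toMeasure {v | v 0 = w s} = 1) :
    IsConcat s P Q (concatMeasure P hQ) := by
  refine ⟨⟨hQ, fun A hA B hB => ?_⟩, fun A hA => concatMeasure_apply_natF P hQ hA⟩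
  have hA' := natF_le s _ hA
  have hshift : (fun p : IPath X × IPath X => glue s p.1 p.2) ⁻¹' (A ∩ shift s ⁻¹' B)
      =ᵐ[P.toMeasure.compProd (shiftKernel hQ)] A ×ˢ B := by
    rw [preimage_inter, glue_preimage_of_measurableSet_natF hA]
    filter_upwards [ae_eval_eq_eval_zero_compProd P hQ hstart] with p hp
    refine propext ?_
    change (p ∈ A ×ˢ univ ∧ shift s (glue s p.1 p.2) ∈ B) ↔ p ∈ A ×ˢ B
    simp [shift_glue hp]
  have hQB : Measurable[natF X s] fun w => (Q w).toMeasure B :=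
    (Measure.measurable_coe hB).comp (measurable_coe_natF hQ)
  calc (concatMeasure P hQ).toMeasure (A ∩ shift s ⁻¹' B)
      = P.toMeasure.compProd (shiftKernel hQ) (A ×ˢ B) := by
        rw [concatMeasure, ProbabilityMeasure.coe_mk, Measure.map_apply (measurable_glue s)
          (hA'.inter (measurable_shift s hB)), measure_congr hshift]
    _ = ∫⁻ w in A, (Q w).toMeasure B ∂P := Measure.compProd_apply_prod hA' hB
    _ = ∫⁻ w in A, (Q w).toMeasure B ∂concatMeasure P hQ := by
        rw [← setLIntegral_trim (natF_le s) hQB hA, ← setLIntegral_trim (natF_le s) hQB hA,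
          trim_eq_trim_of_forall_measure_eq (natF_le s)
            fun A hA => concatMeasure_apply_natF P hQ hA]

end Disintegration

section PreMarkov

variable [MeasurableSpace X]

/-- A pre-Markov family of sets of path measures, i.e. a measurable compact multifunction with the
conditions (C3), (MP1) and (MP2) of the Markov selection theorem. -/
structure IsPreMarkov (C : X → Set (ProbabilityMeasure (IPath X))) : Prop
    extends IsCompactMultifunction C where
  measure_start : ∀ x, ∀ P ∈ C x, P.toMeasure {w | w 0 = x} = 1
  exists_disintegration : ∀ x, ∀ P ∈ C x, ∀ s, ∃ Q, IsShiftDisintegration s P Q ∧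
    ∀ᵐ w ∂P.toMeasure, Q w ∈ C (w s)
  concat_mem : ∀ x, ∀ P ∈ C x, ∀ s Q R, (∀ w, Q w ∈ C (w s)) → IsConcat s P Q R → R ∈ C x

/-- A path functional whose dependence on the future after any time `s` is that of a positive
multiple of the same functional of the shifted path. Maximising its expectation over the elements of
a pre-Markov family amounts to maximising it over their conditional distributions at time `s`. -/
def IsDiscounted (H : BoundedContinuousFunction (IPath X) ℝ) : Prop :=
  ∀ s : ℝ≥0, ∃ c : ℝ, 0 < c ∧ Measurable[natF X s] fun w => H w - c * H (shift s w)

variable [BorelSpace X] {s : ℝ≥0} {P R : ProbabilityMeasure (IPath X)}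
  {Q Q' : IPath X → ProbabilityMeasure (IPath X)} {H : BoundedContinuousFunction (IPath X) ℝ}

lemma integrable_integral_natF (hQ : Measurable[natF X s, borel _] Q)
    (H : BoundedContinuousFunction (IPath X) ℝ) (P : ProbabilityMeasure (IPath X)) :
    Integrable (fun w => ∫ v, H v ∂(Q w)) P.toMeasure :=
  .of_bound ((measurable_integral_natF hQ H).mono (natF_le s) le_rfl).aestronglyMeasurable ‖H‖
    (.of_forall fun w => H.norm_integral_le_norm (Q w))

variable [PolishSpace X]

lemma IsShiftDisintegration.integral_eq_add (hQ : IsShiftDisintegration s P Q)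
    (H : BoundedContinuousFunction (IPath X) ℝ) (c : ℝ) :
    ∫ w, H w ∂P = ∫ w, (H w - c * H (shift s w)) ∂P + c * ∫ w, ∫ v, H v ∂(Q w) ∂P := by
  have hshift : Integrable (fun w => H (shift s w)) P.toMeasure :=
    .of_bound (H.continuous.measurable.comp (measurable_shift s)).aestronglyMeasurable ‖H‖
      (.of_forall fun w => H.norm_coe_le_norm _)
  rw [integral_sub (H.integrable _) (hshift.const_mul c), integral_const_mul,
    hQ.integral_comp_shift, sub_add_cancel]

lemma IsConcat.integral_sub_integral (hR : IsConcat s P Q' R) (hQ : IsShiftDisintegration s P Q)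
    {c : ℝ} (hH : Measurable[natF X s] fun w => H w - c * H (shift s w)) :
    ∫ w, H w ∂(R : Measure (IPath X)) - ∫ w, H w ∂P =
      c * ∫ w, (∫ v, H v ∂(Q' w) - ∫ v, H v ∂(Q w)) ∂P := by
  rw [hR.integral_eq_add H c, hQ.integral_eq_add H c, hR.integral_eq hH,
    hR.integral_eq (measurable_integral_natF hR.measurable H),
    integral_sub (integrable_integral_natF hR.measurable H P)
      (integrable_integral_natF hQ.measurable H P)]
  ring

namespace IsPreMarkov

lemma iInter {C : ℕ → X → Set (ProbabilityMeasure (IPath X))} (hC : ∀ n, IsPreMarkov (C n))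
    (hanti : Antitone C) : IsPreMarkov fun x => ⋂ n, C n x where
  toIsCompactMultifunction :=
    IsCompactMultifunction.iInter (fun n => (hC n).toIsCompactMultifunction) hanti
  measure_start x P hP := (hC 0).measure_start x P (mem_iInter.1 hP 0)
  exists_disintegration x P hP s := by
    choose Q hQ hQmem using fun n => (hC n).exists_disintegration x P (mem_iInter.1 hP n) s
    refine ⟨Q 0, hQ 0, ?_⟩
    filter_upwards [ae_all_iff.2 fun n => (hQ 0).ae_eq (hQ n), ae_all_iff.2 hQmem]
      with w heq hmem
    exact mem_iInter.2 fun n => heq n ▸ hmem n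
  concat_mem x P hP s Q R hQ hR := mem_iInter.2 fun n =>
    (hC n).concat_mem x P (mem_iInter.1 hP n) s Q R (fun w => mem_iInter.1 (hQ w) n) hR

variable {C : X → Set (ProbabilityMeasure (IPath X))}

lemma exists_isConcat_argmaxOn (hC : IsPreMarkov C) (H : BoundedContinuousFunction (IPath X) ℝ)
    (s : ℝ≥0) (P : ProbabilityMeasure (IPath X)) :
    ∃ Q R, IsConcat s P Q R ∧ ∀ w, Q w ∈ argmaxOn C (fun P => ∫ w, H w ∂P) (w s) := by
  obtain ⟨sel, hsel, hmem⟩ := (hC.toIsCompactMultifunction.argmax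
    (ProbabilityMeasure.continuous_integral_boundedContinuousFunction
      H)).exists_measurable_selection_probabilityMeasure
  have hQ : Measurable[natF X s, borel _] fun w : IPath X => sel (w s) :=
    @Measurable.comp _ _ _ (_) _ (borel _) _ _ hsel (measurable_eval_natF le_rfl)
  exact ⟨_, _, isConcat_concatMeasure P hQ fun w => hC.measure_start _ _ (hmem (w s)).1,
    fun w => hmem (w s)⟩

lemma ae_mem_argmaxOn (hC : IsPreMarkov C) (hH : IsDiscounted H) {x : X}
    (hP : P ∈ argmaxOn C (fun P => ∫ w, H w ∂P) x) (hQ : IsShiftDisintegration s P Q)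
    (hQC : ∀ᵐ w ∂P.toMeasure, Q w ∈ C (w s)) :
    ∀ᵐ w ∂P.toMeasure, Q w ∈ argmaxOn C (fun P => ∫ w, H w ∂P) (w s) := by
  obtain ⟨c, hc, hHc⟩ := hH s
  -- Continuing optimally after time `s` improves on `Q` pointwise, but not on average, as `P` is
  -- already optimal.
  obtain ⟨Q', R, hR, hQ'⟩ := hC.exists_isConcat_argmaxOn H s P
  have hRmem : R ∈ C x := hC.concat_mem x P hP.1 s Q' R (fun w => (hQ' w).1) hR
  have hgain_nonneg : 0 ≤ᵐ[P.toMeasure] fun w => ∫ v, H v ∂(Q' w) - ∫ v, H v ∂(Q w) := by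
    filter_upwards [hQC] with w hw
    exact sub_nonneg.2 ((hQ' w).2 _ hw)
  have hgain_integral : ∫ w, (∫ v, H v ∂(Q' w) - ∫ v, H v ∂(Q w)) ∂P = 0 := by
    refine le_antisymm ?_ (integral_nonneg_of_ae hgain_nonneg)
    have hmax : ∫ w, H w ∂(R : Measure (IPath X)) ≤ ∫ w, H w ∂P := hP.2 R hRmem
    refine nonpos_of_mul_nonpos_right ?_ hc
    rw [← hR.integral_sub_integral hQ hHc]
    exact sub_nonpos.2 hmax
  have hgain := (integral_eq_zero_iff_of_nonneg_ae hgain_nonneg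
    ((integrable_integral_natF hR.measurable H P).sub
      (integrable_integral_natF hQ.measurable H P))).1 hgain_integral
  filter_upwards [hQC, hgain] with w hw hgain_w
  exact ⟨hw, fun P' hP' => ((hQ' w).2 P' hP').trans (sub_eq_zero.1 hgain_w).le⟩

lemma concat_mem_argmaxOn (hC : IsPreMarkov C) (hH : IsDiscounted H) {x : X}
    (hP : P ∈ argmaxOn C (fun P => ∫ w, H w ∂P) x)
    (hQ : ∀ w, Q w ∈ argmaxOn C (fun P => ∫ w, H w ∂P) (w s)) (hR : IsConcat s P Q R) :
    R ∈ argmaxOn C (fun P => ∫ w, H w ∂P) x := by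
  obtain ⟨c, hc, hHc⟩ := hH s
  obtain ⟨Q', hQ', hQ'C⟩ := hC.exists_disintegration x P hP.1 s
  refine ⟨hC.concat_mem x P hP.1 s Q R (fun w => (hQ w).1) hR, fun P' hP' =>
    (hP.2 P' hP').trans (sub_nonneg.1 ?_)⟩
  rw [hR.integral_sub_integral hQ' hHc]
  refine mul_nonneg hc.le (integral_nonneg_of_ae ?_)
  filter_upwards [hQ'C] with w hw
  exact sub_nonneg.2 ((hQ w).2 _ hw)

lemma argmax (hC : IsPreMarkov C) (hH : IsDiscounted H) :
    IsPreMarkov (argmaxOn C fun P => ∫ w, H w ∂P) where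
  toIsCompactMultifunction := hC.toIsCompactMultifunction.argmax
    (ProbabilityMeasure.continuous_integral_boundedContinuousFunction H)
  measure_start x P hP := hC.measure_start x P hP.1
  exists_disintegration x P hP s := by
    obtain ⟨Q, hQ, hQC⟩ := hC.exists_disintegration x P hP.1 s
    exact ⟨Q, hQ, hC.ae_mem_argmaxOn hH hP hQ hQC⟩
  concat_mem _ _ hP _ _ _ hQ hR := hC.concat_mem_argmaxOn hH hP hQ hR

lemma iInter_iterArgmax (hC : IsPreMarkov C) {H : ℕ → BoundedContinuousFunction (IPath X) ℝ}
    (hH : ∀ n, IsDiscounted (H n)) :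
    IsPreMarkov fun x => ⋂ n, iterArgmax C (fun n P => ∫ w, H n w ∂P) n x := by
  refine iInter (fun n => ?_) (antitone_iterArgmax C _)
  induction n with
  | zero => exact hC
  | succ n ih => exact ih.argmax (hH n)

end IsPreMarkov

end PreMarkov

section Laplace

open ProbabilityTheory
open scoped BoundedContinuousFunction

section Moments

variable {E : Type*} [TopologicalSpace E]

/-- The algebra of polynomials in a bounded continuous function `u`. -/
def polynomialAlgebra (u : E →ᵇ ℝ) : StarSubalgebra ℝ (E →ᵇ ℝ) where
  toSubalgebra := Algebra.adjoin ℝ {u}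
  star_mem' {a} ha := by rwa [show star a = a by ext; simp]

lemma separatesPoints_polynomialAlgebra {u : E →ᵇ ℝ} (hu : Function.Injective u) :
    ((polynomialAlgebra u).map
      (BoundedContinuousFunction.toContinuousMapStarₐ ℝ)).SeparatesPoints :=
  fun _ _ hxy => ⟨u, ⟨_, ⟨u, Algebra.self_mem_adjoin_singleton ℝ u, rfl⟩, rfl⟩, hu.ne hxy⟩

variable [MeasurableSpace E] [BorelSpace E]

lemma integral_eq_of_mem_polynomialAlgebra {μ ν : Measure E} [IsFiniteMeasure μ]
    [IsFiniteMeasure ν] {u : E →ᵇ ℝ} (h : ∀ k : ℕ, ∫ x, u x ^ k ∂μ = ∫ x, u x ^ k ∂ν)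
    {g : E →ᵇ ℝ} (hg : g ∈ polynomialAlgebra u) : ∫ x, g x ∂μ = ∫ x, g x ∂ν := by
  replace hg : g ∈ Algebra.adjoin ℝ {u} := hg
  rw [Algebra.adjoin_singleton_eq_range_aeval] at hg
  obtain ⟨p, rfl⟩ := hg
  simp only [AlgHom.toRingHom_eq_coe, RingHom.coe_coe]
  induction p using Polynomial.induction_on' with
  | add p q hp hq =>
    simp only [map_add, BoundedContinuousFunction.add_apply]
    rw [integral_add (BoundedContinuousFunction.integrable _ _)
      (BoundedContinuousFunction.integrable _ _), integral_add
      (BoundedContinuousFunction.integrable _ _) (BoundedContinuousFunction.integrable _ _), hp, hq]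
  | monomial n a =>
    have haeval (x : E) : Polynomial.aeval u (Polynomial.monomial n a) x = a * u x ^ n := by
      rw [Polynomial.aeval_monomial, ← Algebra.smul_def]
      simp
    simp only [haeval, integral_const_mul, h]

variable [PolishSpace E]

lemma measure_ext_of_forall_integral_pow_eq {μ ν : Measure E} [IsFiniteMeasure μ]
    [IsFiniteMeasure ν] {u : E →ᵇ ℝ} (hu : Function.Injective u)
    (h : ∀ k : ℕ, ∫ x, u x ^ k ∂μ = ∫ x, u x ^ k ∂ν) : μ = ν :=
  ext_of_forall_mem_subalgebra_integral_eq_of_polish (𝕜 := ℝ)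
    (separatesPoints_polynomialAlgebra hu) fun _ hg => integral_eq_of_mem_polynomialAlgebra h hg

lemma ae_eq_zero_of_forall_integral_pow_mul_eq_zero {μ : Measure E} [IsFiniteMeasure μ]
    {u : E →ᵇ ℝ} (hu : Function.Injective u) {g : E → ℝ} (hg : Integrable g μ)
    (h : ∀ k : ℕ, ∫ x, u x ^ k * g x ∂μ = 0) : g =ᵐ[μ] 0 := by
  have hpos : AEMeasurable (fun x => ENNReal.ofReal (g x)) μ := hg.aemeasurable.ennreal_ofReal
  have hneg : AEMeasurable (fun x => ENNReal.ofReal (-g x)) μ :=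
    hg.aemeasurable.neg.ennreal_ofReal
  have : IsFiniteMeasure (μ.withDensity fun x => ENNReal.ofReal (g x)) :=
    isFiniteMeasure_withDensity_ofReal hg.2
  have : IsFiniteMeasure (μ.withDensity fun x => ENNReal.ofReal (-g x)) :=
    isFiniteMeasure_withDensity_ofReal hg.neg.2
  have hint {f : E → ℝ} (hf : Integrable f μ) (k : ℕ) :
      Integrable (fun x => (ENNReal.ofReal (f x)).toReal • u x ^ k) μ := by
    simp only [ENNReal.toReal_ofReal', smul_eq_mul]
    exact hf.pos_part.mul_bdd (c := ‖u ^ k‖) (u ^ k).continuous.aestronglyMeasurable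
      (.of_forall fun x => (u ^ k).norm_coe_le_norm x)
  have hdensity : (μ.withDensity fun x => ENNReal.ofReal (g x)) =
      μ.withDensity fun x => ENNReal.ofReal (-g x) := by
    refine measure_ext_of_forall_integral_pow_eq hu fun k => sub_eq_zero.1 ?_
    rw [integral_withDensity_eq_integral_toReal_smul₀ hpos (.of_forall fun _ => by simp),
      integral_withDensity_eq_integral_toReal_smul₀ hneg (.of_forall fun _ => by simp),
      ← integral_sub (hint hg k) (hint hg.fun_neg k), ← h k]
    refine integral_congr_ae (.of_forall fun x => ?_)
    simp only [ENNReal.toReal_ofReal', smul_eq_mul, ← sub_mul]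
    rw [max_zero_sub_max_neg_zero_eq_self, mul_comm]
  filter_upwards [(withDensity_eq_iff_of_sigmaFinite hpos hneg).1 hdensity] with x hx
  rcases le_total 0 (g x) with hx0 | hx0
  · rw [ENNReal.ofReal_of_nonpos (neg_nonpos.2 hx0), ENNReal.ofReal_eq_zero] at hx
    exact le_antisymm hx hx0
  · rw [ENNReal.ofReal_of_nonpos hx0, eq_comm, ENNReal.ofReal_eq_zero, neg_nonpos] at hx
    exact le_antisymm hx0 hx

end Moments

lemma expMeasure_eq_withDensity (r : ℝ) :
    expMeasure r = volume.withDensity (exponentialPDF r) := rfl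

/-- The exponential distribution of rate `r`, as a measure on the half-line `ℝ≥0`. It is the zero
measure if `r ≤ 0`. -/
def expLaw (r : ℝ) : Measure ℝ≥0 := (expMeasure r).map Real.toNNReal

instance (r : ℝ) : IsFiniteMeasure (expLaw r) := by
  have : IsFiniteMeasure (expMeasure r) := by
    rcases le_or_gt r 0 with hr | hr
    · have hpdf : exponentialPDF r = 0 := by
        ext x
        rw [exponentialPDF_eq, Pi.zero_apply, ENNReal.ofReal_eq_zero]
        split_ifs
        exacts [mul_nonpos_of_nonpos_of_nonneg hr (Real.exp_nonneg _), le_rfl]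
      rw [expMeasure_eq_withDensity, hpdf, withDensity_zero]
      infer_instance
    · have := isProbabilityMeasure_expMeasure hr
      infer_instance
  exact Measure.isFiniteMeasure_map _ _

lemma expLaw_Ici {r : ℝ} (hr : 0 < r) (t : ℝ≥0) :
    expLaw r (Ici t) = ENNReal.ofReal (Real.exp (-(r * t))) := by
  have := isProbabilityMeasure_expMeasure hr
  rw [expLaw, Measure.map_apply measurable_real_toNNReal measurableSet_Ici]
  rcases eq_zero_or_pos t with rfl | ht
  · simp
  have hpre : Real.toNNReal ⁻¹' Ici t = (Iio (t : ℝ))ᶜ := by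
    ext x
    simp [Real.le_toNNReal_iff_coe_le' ht]
  have hIio : expMeasure r (Iio (t : ℝ)) = ENNReal.ofReal (1 - Real.exp (-(r * t))) := by
    rw [expMeasure_eq_withDensity, withDensity_apply _ measurableSet_Iio,
      setLIntegral_congr Iio_ae_eq_Iic,
      lintegral_exponentialPDF_eq_antiDeriv hr, if_pos t.coe_nonneg]
  rw [hpre, prob_compl_eq_one_sub measurableSet_Iio, hIio, ← ENNReal.ofReal_one,
    ← ENNReal.ofReal_sub _ (sub_nonneg.2 (Real.exp_le_one_iff.2 (neg_nonpos.2 (by positivity)))),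
    sub_sub_cancel]

/-- The law `ν` of a waiting time is memoryless if, up to a positive factor, the waiting time which
remains after any time `s` again has law `ν`. -/
def IsMemoryless (ν : Measure ℝ≥0) : Prop :=
  ∀ s : ℝ≥0, ∃ c : ℝ≥0, 0 < c ∧ ν.restrict (Ici s) = c • ν.map (s + ·)

lemma isMemoryless_expLaw {r : ℝ} (hr : 0 < r) : IsMemoryless (expLaw r) := by
  intro s
  refine ⟨(Real.exp (-(r * s))).toNNReal, Real.toNNReal_pos.2 (Real.exp_pos _), ?_⟩
  refine Measure.ext_of_Ici _ _ fun t => ?_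
  have hpre : (s + ·) ⁻¹' Ici t = Ici (t - s) := by
    ext u
    simp [add_comm s]
  have hmax : ((max t s : ℝ≥0) : ℝ) = s + (t - s : ℝ≥0) := by
    rw [← NNReal.coe_add, max_comm, add_tsub_eq_max]
  rw [Measure.restrict_apply measurableSet_Ici, Ici_inter_Ici, Measure.smul_apply,
    Measure.map_apply (by fun_prop) measurableSet_Ici, hpre, expLaw_Ici hr, expLaw_Ici hr, hmax,
    mul_add, neg_add, Real.exp_add, ENNReal.ofReal_mul (Real.exp_nonneg _)]
  rfl

lemma isOpenPosMeasure_expLaw {r : ℝ} (hr : 0 < r) : (expLaw r).IsOpenPosMeasure := by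
  refine ⟨fun U hU ⟨a, ha⟩ => ?_⟩
  obtain ⟨b, hab, hbU⟩ := exists_Ico_subset_of_mem_nhds (hU.mem_nhds ha) ⟨a + 1, by simp⟩
  have hlt : expLaw r (Ici b) < expLaw r (Ici a) := by
    rw [expLaw_Ici hr, expLaw_Ici hr, ENNReal.ofReal_lt_ofReal_iff (Real.exp_pos _),
      Real.exp_lt_exp]
    gcongr
  have hpos : expLaw r (Ico a b) ≠ 0 := by
    rw [← Ici_sdiff_Ici, measure_sdiff (Ici_subset_Ici.2 hab.le) measurableSet_Ici.nullMeasurableSet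
      (measure_ne_top _ _)]
    exact (tsub_pos_of_lt hlt).ne'
  exact fun h => hpos (measure_mono_null hbU h)

lemma integral_expLaw {r : ℝ} (hr : 0 < r) {g : ℝ≥0 → ℝ} (hg : Measurable g) :
    ∫ t, g t ∂expLaw r = ∫ t in Ici (0 : ℝ), r * Real.exp (-(r * t)) * g t.toNNReal := by
  have hpdf : Measurable (exponentialPDF r) := (measurable_exponentialPDFReal r).ennreal_ofReal
  rw [expLaw, integral_map measurable_real_toNNReal.aemeasurable hg.aestronglyMeasurable,
    expMeasure_eq_withDensity,
    integral_withDensity_eq_integral_toReal_smul hpdf (.of_forall fun _ => ENNReal.ofReal_lt_top),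
    ← integral_indicator measurableSet_Ici]
  congr with t
  rcases le_or_gt 0 t with ht | ht
  · rw [indicator_of_mem (mem_Ici.2 ht), exponentialPDF_of_nonneg ht,
      ENNReal.toReal_ofReal (by positivity), smul_eq_mul]
  · rw [indicator_of_notMem (notMem_Ici.2 ht), exponentialPDF_of_neg ht, ENNReal.toReal_zero,
      zero_smul]

lemma integral_expLaw_succ {g : ℝ≥0 → ℝ} (hg : Measurable g) (k : ℕ) :
    ∫ t, g t ∂expLaw (k + 1) = (k + 1) * ∫ t, Real.exp (-t) ^ k * g t ∂expLaw 1 := by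
  rw [integral_expLaw (by positivity) hg, integral_expLaw one_pos (by fun_prop),
    ← integral_const_mul]
  refine setIntegral_congr_fun measurableSet_Ici fun t ht => ?_
  have hexp : Real.exp (-((k + 1) * t)) = Real.exp (-t) * Real.exp (-t) ^ k := by
    rw [← Real.exp_nat_mul, ← Real.exp_add]
    ring_nf
  simp only [Real.coe_toNNReal t ht, one_mul, hexp]
  ring

/-- The function `t ↦ exp (-t)` on the half-line. -/
def expNeg : ℝ≥0 →ᵇ ℝ :=
  .ofNormedAddCommGroup (fun t => Real.exp (-t)) (by fun_prop) 1 fun t => by simp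

lemma injective_expNeg : Function.Injective expNeg := fun _ _ h =>
  NNReal.coe_injective (neg_injective (Real.exp_injective h))

lemma eq_of_forall_integral_expLaw_eq {g g' : ℝ≥0 →ᵇ ℝ}
    (h : ∀ k : ℕ, ∫ t, g t ∂expLaw (k + 1) = ∫ t, g' t ∂expLaw (k + 1)) : g = g' := by
  have hmoment (k : ℕ) :
      ∫ t, Real.exp (-t) ^ k * g t ∂expLaw 1 = ∫ t, Real.exp (-t) ^ k * g' t ∂expLaw 1 := by
    have hk := h k
    rwa [integral_expLaw_succ g.continuous.measurable,
      integral_expLaw_succ g'.continuous.measurable, mul_right_inj' (by positivity)] at hk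
  have hint (f : ℝ≥0 →ᵇ ℝ) (k : ℕ) : Integrable (fun t => expNeg t ^ k * f t) (expLaw 1) :=
    (expNeg ^ k * f).integrable _
  have hzero : ⇑(g - g') =ᵐ[expLaw 1] ⇑(0 : ℝ≥0 →ᵇ ℝ) := by
    refine ae_eq_zero_of_forall_integral_pow_mul_eq_zero injective_expNeg
      ((g - g').integrable _) fun k => ?_
    simp only [BoundedContinuousFunction.sub_apply, mul_sub]
    rw [integral_sub (hint g k) (hint g' k)]
    exact sub_eq_zero.2 (hmoment k)
  have := isOpenPosMeasure_expLaw one_pos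
  have hsub := (Continuous.ae_eq_iff_eq (expLaw 1) (g - g').continuous
    (0 : ℝ≥0 →ᵇ ℝ).continuous).1 hzero
  exact sub_eq_zero.1 (DFunLike.coe_injective hsub)

end Laplace

section TimeAverage

open scoped BoundedContinuousFunction

variable [PolishSpace X]

/-- The average `w ↦ ∫ f (w t) ν(dt)` of a state function along the path. -/
def timeAverage (ν : Measure ℝ≥0) [IsFiniteMeasure ν] (f : X →ᵇ ℝ) : IPath X →ᵇ ℝ :=
  .ofNormedAddCommGroup (fun w => ∫ t, f (w t) ∂ν)
    (continuous_of_dominated (bound := fun _ => ‖f‖)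
      (fun w => (f.continuous.comp w.continuous).aestronglyMeasurable)
      (fun w => .of_forall fun t => f.norm_coe_le_norm (w t)) (integrable_const _)
      (.of_forall fun t => f.continuous.comp (continuous_eval_const t)))
    (‖f‖ * ν.real univ) fun w => norm_integral_le_of_norm_le_const
      (.of_forall fun t => f.norm_coe_le_norm (w t))

variable {ν : Measure ℝ≥0} [IsFiniteMeasure ν]

lemma timeAverage_apply (f : X →ᵇ ℝ) (w : IPath X) :
    timeAverage ν f w = ∫ t, f (w t) ∂ν := rfl

lemma timeAverage_stopPath_restrict_Iio (s : ℝ≥0) (f : X →ᵇ ℝ) (w : IPath X) :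
    timeAverage (ν.restrict (Iio s)) f (stopPath s w) = ∫ t in Iio s, f (w t) ∂ν :=
  setIntegral_congr_fun measurableSet_Iio fun t ht => by
    simp only [stopPath_apply, min_eq_left (mem_Iio.1 ht).le]

lemma timeAverage_eq_add_of_restrict_Ici_eq {s c : ℝ≥0}
    (hc : ν.restrict (Ici s) = c • ν.map (s + ·)) (f : X →ᵇ ℝ) (w : IPath X) :
    timeAverage ν f w =
      timeAverage (ν.restrict (Iio s)) f (stopPath s w) + c * timeAverage ν f (shift s w) := by
  have hcont : Continuous fun t => f (w t) := f.continuous.comp w.continuous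
  have hint : Integrable (fun t => f (w t)) ν :=
    .of_bound hcont.aestronglyMeasurable ‖f‖ (.of_forall fun t => f.norm_coe_le_norm _)
  have hfuture : ∫ t in Ici s, f (w t) ∂ν = c * timeAverage ν f (shift s w) := by
    rw [hc, integral_smul_nnreal_measure, integral_map (by fun_prop) hcont.aestronglyMeasurable]
    rfl
  rw [timeAverage_stopPath_restrict_Iio, ← hfuture, timeAverage_apply,
    ← integral_add_compl measurableSet_Iio hint, compl_Iio]

lemma integral_timeAverage (f : X →ᵇ ℝ) (P : ProbabilityMeasure (IPath X)) :
    ∫ w, timeAverage ν f w ∂P = ∫ t, ∫ w : IPath X, f (w t) ∂P ∂ν := by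
  have hcont : Continuous fun p : IPath X × ℝ≥0 => f (p.1 p.2) :=
    f.continuous.comp (continuous_fst.eval continuous_snd)
  exact integral_integral_swap (.of_bound hcont.aestronglyMeasurable ‖f‖
    (.of_forall fun p => f.norm_coe_le_norm _))

/-- The expectations `t ↦ E_P[f (w t)]` of a state function along the path. -/
def marginalIntegral (P : ProbabilityMeasure (IPath X)) (f : X →ᵇ ℝ) : ℝ≥0 →ᵇ ℝ :=
  .ofNormedAddCommGroup (fun t => ∫ w : IPath X, f (w t) ∂P)
    (continuous_of_dominated (bound := fun _ => ‖f‖)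
      (fun t => (f.continuous.comp (continuous_eval_const t)).aestronglyMeasurable)
      (fun t => .of_forall fun w => f.norm_coe_le_norm (w t)) (integrable_const _)
      (.of_forall fun w => f.continuous.comp w.continuous))
    ‖f‖ fun t => by
      simpa using norm_integral_le_of_norm_le_const (μ := P.toMeasure)
        (.of_forall fun w : IPath X => f.norm_coe_le_norm (w t))

lemma integral_eval_eq_of_forall_integral_timeAverage_eq {f : X →ᵇ ℝ}
    {P P' : ProbabilityMeasure (IPath X)}
    (h : ∀ k : ℕ, ∫ w, timeAverage (expLaw (k + 1)) f w ∂P =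
      ∫ w, timeAverage (expLaw (k + 1)) f w ∂P') (t : ℝ≥0) :
    ∫ w : IPath X, f (w t) ∂P = ∫ w : IPath X, f (w t) ∂P' := by
  have hmarginal : marginalIntegral P f = marginalIntegral P' f :=
    eq_of_forall_integral_expLaw_eq fun k => by
      simpa only [integral_timeAverage] using! h k
  exact DFunLike.congr_fun hmarginal t

variable [MeasurableSpace X] [BorelSpace X]

lemma IsMemoryless.isDiscounted_timeAverage (hν : IsMemoryless ν) (f : X →ᵇ ℝ) :
    IsDiscounted (timeAverage ν f) := by
  intro s
  obtain ⟨c, hc, hsplit⟩ := hν s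
  refine ⟨c, hc, ?_⟩
  have hpast : (fun w => timeAverage ν f w - c * timeAverage ν f (shift s w)) =
      fun w => timeAverage (ν.restrict (Iio s)) f (stopPath s w) :=
    funext fun w => sub_eq_of_eq_add (timeAverage_eq_add_of_restrict_Ici_eq hsplit f w)
  rw [hpast]
  exact (timeAverage _ f).continuous.measurable.comp (measurable_stopPath_natF s)

lemma map_eval_eq_of_forall_integral_timeAverage_eq {f : ℕ → X →ᵇ ℝ} (hf : IsMeasureDetermining f)
    {P P' : ProbabilityMeasure (IPath X)}
    (h : ∀ k m : ℕ, ∫ w, timeAverage (expLaw (k + 1)) (f m) w ∂P =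
      ∫ w, timeAverage (expLaw (k + 1)) (f m) w ∂P') (t : ℝ≥0) :
    P.toMeasure.map (fun w => w t) = P'.toMeasure.map fun w => w t := by
  have hmeas := measurable_eval (X := X) t
  have := Measure.isProbabilityMeasure_map (μ := P.toMeasure) hmeas.aemeasurable
  have := Measure.isProbabilityMeasure_map (μ := P'.toMeasure) hmeas.aemeasurable
  refine hf fun m => ?_
  rw [integral_map hmeas.aemeasurable (f m).continuous.aestronglyMeasurable,
    integral_map hmeas.aemeasurable (f m).continuous.aestronglyMeasurable]
  exact integral_eval_eq_of_forall_integral_timeAverage_eq (fun k => h k m) t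

end TimeAverage

section Uniqueness

lemma setOf_forall_mem_insert_eq_inter_preimage_shift {a c : ℝ≥0} {S : Finset ℝ≥0} (hca : c ≤ a)
    (hS : ∀ t ∈ S, a < t) (A : ℝ≥0 → Set X) :
    {w : IPath X | ∀ t ∈ insert a S, w (t - c) ∈ A t} =
      (fun w : IPath X => w (a - c)) ⁻¹' A a ∩
        shift (a - c) ⁻¹' {w | ∀ t ∈ S, w (t - a) ∈ A t} := by
  ext w
  simp only [Finset.forall_mem_insert]
  refine and_congr Iff.rfl (forall₂_congr fun t ht => ?_)
  rw [shift_apply, add_comm, tsub_add_tsub_cancel (hS t ht).le hca]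

variable [MeasurableSpace X] {D : X → Set (ProbabilityMeasure (IPath X))}

lemma IsPreMarkov.isShiftDisintegration_of_subsingleton (hD : IsPreMarkov D)
    (hsub : ∀ x, (D x).Subsingleton) {sel : X → ProbabilityMeasure (IPath X)}
    (hsel : Measurable[_, borel _] sel) (hmem : ∀ x, sel x ∈ D x) (x : X) (s : ℝ≥0) :
    IsShiftDisintegration s (sel x) fun w => sel (w s) where
  measurable := @Measurable.comp _ _ _ (_) _ (borel _) _ _ hsel (measurable_eval_natF le_rfl)
  measure_inter A hA B hB := by
    obtain ⟨Q, hQ, hQD⟩ := hD.exists_disintegration x (sel x) (hmem x) s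
    rw [hQ.measure_inter A hA B hB]
    refine lintegral_congr_ae (ae_restrict_of_ae ?_)
    filter_upwards [hQD] with w hw
    rw [hsub (w s) hw (hmem (w s))]

variable [BorelSpace X] [PolishSpace X]

-- Measuring times from a variable origin `c` makes the statement reproduce itself for the shifted
-- path when one conditions at the first time in `S`.
lemma IsPreMarkov.measure_cylinder_eq (hD : IsPreMarkov D)
    (hmarg : ∀ x, ∀ P ∈ D x, ∀ P' ∈ D x, ∀ t : ℝ≥0,
      P.toMeasure.map (fun w => w t) = P'.toMeasure.map fun w => w t)
    {A : ℝ≥0 → Set X} (hA : ∀ t, MeasurableSet (A t)) (S : Finset ℝ≥0) (c : ℝ≥0)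
    (hc : ∀ t ∈ S, c ≤ t) (x : X) (P : ProbabilityMeasure (IPath X)) (hP : P ∈ D x)
    (P' : ProbabilityMeasure (IPath X)) (hP' : P' ∈ D x) :
    P.toMeasure {w | ∀ t ∈ S, w (t - c) ∈ A t} = P'.toMeasure {w | ∀ t ∈ S, w (t - c) ∈ A t} := by
  induction S using Finset.induction_on_min generalizing c x P P' with
  | empty => simp
  | insert a S ha ih =>
    obtain ⟨sel, hsel, hmem⟩ :=
      hD.toIsCompactMultifunction.exists_measurable_selection_probabilityMeasure
    have hca : c ≤ a := hc a (Finset.mem_insert_self a S)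
    set E : Set (IPath X) := {w | ∀ t ∈ S, w (t - a) ∈ A t} with hE_def
    have hE : MeasurableSet E := by
      simp only [hE_def, Set.ofPred_forall]
      exact Finset.measurableSet_biInter _ fun t _ => measurable_eval _ (hA t)
    have hselE : Measurable fun y => (sel y).toMeasure E := (Measure.measurable_coe hE).comp
      (@Measurable.comp _ _ _ _ (borel _) _ _ _ measurable_borel_coe_probabilityMeasure hsel)
    have hval : ∀ P ∈ D x, P.toMeasure {w | ∀ t ∈ insert a S, w (t - c) ∈ A t} =
        ∫⁻ y in A a, (sel y).toMeasure E ∂(P.toMeasure.map fun w => w (a - c)) := by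
      intro P hP
      obtain ⟨Q, hQ, hQD⟩ := hD.exists_disintegration x P hP (a - c)
      rw [setOf_forall_mem_insert_eq_inter_preimage_shift hca ha,
        hQ.measure_inter _ (measurable_eval_natF le_rfl (hA a)) E hE,
        setLIntegral_map (hA a) hselE (measurable_eval _)]
      refine lintegral_congr_ae (ae_restrict_of_ae ?_)
      filter_upwards [hQD] with w hw
      exact ih a (fun t ht => (ha t ht).le) _ _ hw _ (hmem _)
    rw [hval P hP, hval P' hP', hmarg x P hP P' hP']

lemma IsPreMarkov.subsingleton_of_map_eval_eq (hD : IsPreMarkov D)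
    (hmarg : ∀ x, ∀ P ∈ D x, ∀ P' ∈ D x, ∀ t : ℝ≥0,
      P.toMeasure.map (fun w => w t) = P'.toMeasure.map fun w => w t) (x : X) :
    (D x).Subsingleton := by
  intro P hP P' hP'
  refine Subtype.ext (path_measure_ext (μ := P.toMeasure) (ν := P'.toMeasure) fun A hA S => ?_)
  simpa only [tsub_zero] using
    hD.measure_cylinder_eq hmarg hA S 0 (fun t _ => zero_le) x P hP P' hP'

end Uniqueness

theorem markov_selection_general {X : Type*} [TopologicalSpace X] [PolishSpace X]
    [MeasurableSpace X] [BorelSpace X] {C : X → Set (ProbabilityMeasure (IPath X))}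
    (hC : IsPreMarkov C) :
    ∃ sel : X → ProbabilityMeasure (IPath X), Measurable[_, borel _] sel ∧ (∀ x, sel x ∈ C x) ∧
      ∀ x s, IsShiftDisintegration s (sel x) fun w => sel (w s) := by
  obtain ⟨f, hf⟩ := exists_isMeasureDetermining X
  let H (n : ℕ) : BoundedContinuousFunction (IPath X) ℝ :=
    timeAverage (expLaw (n.unpair.1 + 1)) (f n.unpair.2)
  have hD : IsPreMarkov fun x => ⋂ n, iterArgmax C (fun n P => ∫ w, H n w ∂P) n x :=
    hC.iInter_iterArgmax fun n =>
      (isMemoryless_expLaw (by positivity)).isDiscounted_timeAverage (f n.unpair.2)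
  have hsub := hD.subsingleton_of_map_eval_eq fun x P hP P' hP' =>
    map_eval_eq_of_forall_integral_timeAverage_eq hf fun k m => by
      simpa [H] using apply_eq_of_mem_iInter_iterArgmax hP hP' (Nat.pair k m)
  choose sel hmem using hD.nonempty
  have hsel := hD.toIsCompactMultifunction.measurable_of_subsingleton hsub hmem
  exact ⟨sel, hsel, fun x => mem_iInter.1 (hmem x) 0,
    hD.isShiftDisintegration_of_subsingleton hsub hsel hmem⟩

/-- **Markov selection theorem.**  Let `𝒞 : X → 2^𝒫` have nonempty compact convex
values (C1), be measurable (C2), with `P(Ω_x) = 1` for `P ∈ 𝒞(x)` (C3).  If the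
regular conditional probability distributions of members of `𝒞(x)` lie in `𝒞(w(s))`
(MP1), and `𝒞` is stable under the products `P ⊗_s Q` (MP2), then `𝒞` has a
measurable selection `x ↦ P_x` with the Markov property
`P_x[θ_s⁻¹(·) | ℱ_s](w) = P_{w(s)}(·)` for `P_x`-a.e. `w`. -/
theorem markov_selection
    {X : Type*} [TopologicalSpace X] [PolishSpace X] [MeasurableSpace X] [BorelSpace X]
    (C : X → Set (ProbabilityMeasure (IPath X)))
    (hC1 : ∀ x, (C x).Nonempty ∧ IsCompact (C x) ∧ ConvexMeasSet (C x))
    (hC2 : ∀ K : Set (ProbabilityMeasure (IPath X)), IsClosed K →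
      MeasurableSet {x | (C x ∩ K).Nonempty})
    (hC3 : ∀ x, ∀ P ∈ C x, (P : Measure (IPath X)) {w : IPath X | w 0 = x} = 1)
    (hMP1 : ∀ x, ∀ P ∈ C x, ∀ s : ℝ≥0,
      ∃ Q : IPath X → ProbabilityMeasure (IPath X),
        (∀ U : Set (ProbabilityMeasure (IPath X)), IsOpen U →
          MeasurableSet[natF X s] (Q ⁻¹' U)) ∧
        (∀ᵐ w ∂(P : Measure (IPath X)), Q w ∈ C (w s)) ∧
        (∀ A : Set (IPath X), MeasurableSet[natF X s] A →
          ∀ B : Set (IPath X), MeasurableSet B →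
            (P : Measure (IPath X)) (A ∩ shift s ⁻¹' B) =
              ∫⁻ w in A, (Q w : Measure (IPath X)) B ∂(P : Measure (IPath X))))
    (hMP2 : ∀ x, ∀ P ∈ C x, ∀ s : ℝ≥0,
      ∀ Q : IPath X → ProbabilityMeasure (IPath X),
        (∀ U : Set (ProbabilityMeasure (IPath X)), IsOpen U →
          MeasurableSet[natF X s] (Q ⁻¹' U)) →
        (∀ w, Q w ∈ C (w s)) →
        ∀ R : ProbabilityMeasure (IPath X),
          ((∀ A : Set (IPath X), MeasurableSet[natF X s] A →
              (R : Measure (IPath X)) A = (P : Measure (IPath X)) A) ∧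
           (∀ A : Set (IPath X), MeasurableSet[natF X s] A →
              ∀ B : Set (IPath X), MeasurableSet B →
                (R : Measure (IPath X)) (A ∩ shift s ⁻¹' B) =
                  ∫⁻ w in A, (Q w : Measure (IPath X)) B ∂(R : Measure (IPath X)))) →
          R ∈ C x) :
    ∃ sel : X → ProbabilityMeasure (IPath X),
      (∀ U : Set (ProbabilityMeasure (IPath X)), IsOpen U →
        MeasurableSet (sel ⁻¹' U)) ∧
      (∀ x, sel x ∈ C x) ∧
      ∀ x, ∀ s : ℝ≥0, ∀ A : Set (IPath X), MeasurableSet[natF X s] A →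
        ∀ B : Set (IPath X), MeasurableSet B →
          (sel x : Measure (IPath X)) (A ∩ shift s ⁻¹' B) =
            ∫⁻ w in A, (sel (w s) : Measure (IPath X)) B ∂(sel x : Measure (IPath X)) := by
  have hPM : IsPreMarkov C :=
    { nonempty := fun x => (hC1 x).1
      isCompact := fun x => (hC1 x).2.1
      measurableSet_hit := hC2
      measure_start := hC3
      exists_disintegration := fun x P hP s => by
        obtain ⟨Q, hQ, hQC, hQP⟩ := hMP1 x P hP s
        exact ⟨Q, ⟨@measurable_generateFrom _ _ (_) _ _ hQ, hQP⟩, hQC⟩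
      concat_mem := fun x P hP s Q R hQC hR =>
        hMP2 x P hP s Q (fun U hU => hR.measurable (.basic U hU)) hQC R
          ⟨hR.measure_eq, hR.measure_inter⟩ }
  obtain ⟨sel, hsel, hmem, hmarkov⟩ := markov_selection_general hPM
  exact ⟨sel, fun U hU => hsel (.basic U hU), hmem, fun x s => (hmarkov x s).measure_inter⟩
end
end

section
/- (Strassen) Let (Ω, Ξ) be a measurable space and R a Polish space with Borel σ-algebra. Let C : w ↦ C_w be a set-valued map on Ω whose values are nonempty convex compact sets of Borel probability measures on R, measurable in the sense that for every g ∈ C_b(R) the map w ↦ H_w[g] = sup{∫_R g dμ : μ ∈ C_w} is Ξ-measurable. Let P be a probability measure on (Ω, Ξ) and Q a Borel probability measure on R. Then there exists a Markov kernel 𝔪 from Ω to R with 𝔪·P = Q and 𝔪(·, w) ∈ C_w for P-almost all w, if and only if ∫_R g(r) Q(dr) ≤ ∫_Ω H_w[g] P(dw) for every bounded continuous g : R → ℝ. -/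
open MeasureTheory Set
open scoped NNReal

noncomputable section

/-- The support function `H_w[g] = sup {∫ g dμ : μ ∈ C w}` of the compact convex set
`C w` of probability measures, evaluated at a bounded continuous `g`. -/
def suppFn {Ω' R : Type*} [MeasurableSpace Ω'] [TopologicalSpace R] [MeasurableSpace R]
    (C : Ω' → Set (ProbabilityMeasure R)) (w : Ω')
    (g : BoundedContinuousFunction R ℝ) : ℝ :=
  sSup ((fun μ : ProbabilityMeasure R => ∫ r, g r ∂(μ : Measure R)) '' C w)

open BoundedContinuousFunction Filter ProbabilityTheory Topology TopologicalSpace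
open scoped ENNReal

/-!
Suppose `∫ g dQ ≤ ∫ H_w[g] P(dw)` for all `g ∈ C_b(R)`. On the simple functions
`f : Ω → C_b(R)` the functional `f ↦ ∫ H_w[f w] P(dw)` is sublinear and dominates `g ↦ ∫ g dQ` on
the constants, so by Hahn–Banach there is a linear extension `l` that it still dominates. For
measurable `A`, the functional `g ↦ l (1_A g)` is positive and bounded by `∫ g dQ` for `g ≥ 0`;
it therefore extends to `L²(Q)` and is integration against a measure `M A ≤ Q`. The family `M` is
additive in `A` and `M A` has mass `P A`, so `M` disintegrates as `M A = ∫_A 𝔪(·, w) P(dw)`: the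
Radon–Nikodym densities of `A ↦ M A (-∞, q]`, for rational `q`, are the distribution functions
of the kernel `𝔪` once `R` is embedded in `ℝ`. For each `g`, domination of `l` gives
`∫ g d𝔪(·, w) ≤ H_w[g]` for almost every `w`. The weak topology is induced by countably many
`g ∈ C_b(R)`, so by Hahn–Banach separation countably many such inequalities already force
`𝔪(·, w) ∈ C_w`.
-/

section IntegralFunctional

variable {R : Type*} [TopologicalSpace R] [MeasurableSpace R] [OpensMeasurableSpace R]

/-- Integration against a finite measure, as a continuous linear functional on the bounded
continuous functions. -/
def integralFunctional (μ : Measure R) [IsFiniteMeasure μ] : (R →ᵇ ℝ) →L[ℝ] ℝ :=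
  LinearMap.mkContinuous
    { toFun := fun g => ∫ r, g r ∂μ
      map_add' := fun g h => integral_add (g.integrable μ) (h.integrable μ)
      map_smul' := fun c g => integral_const_mul c g }
    (μ.real univ) (norm_integral_le_mul_norm μ)

lemma integralFunctional_apply (μ : Measure R) [IsFiniteMeasure μ] (g : R →ᵇ ℝ) :
    integralFunctional μ g = ∫ r, g r ∂μ :=
  rfl

end IntegralFunctional

section KernelIntegral

variable {Ω' R E : Type*} [MeasurableSpace Ω'] [MeasurableSpace R] [NormedAddCommGroup E]
  [NormedSpace ℝ E] {P : Measure Ω'} {κ : Kernel Ω' R} {f : R → E}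

lemma integrable_integral_of_integrable_bind [SFinite P] [IsSFiniteKernel κ]
    (hf : Integrable f (P.bind κ)) : Integrable (fun w => ∫ r, f r ∂κ w) P := by
  rw [Measure.comp_eq_comp_const_apply] at hf
  simpa only [Kernel.const_apply] using hf.integral_comp

lemma integral_bind_of_integrable [SFinite P] [IsSFiniteKernel κ]
    (hf : Integrable f (P.bind κ)) : ∫ r, f r ∂P.bind κ = ∫ w, ∫ r, f r ∂κ w ∂P := by
  rw [Measure.comp_eq_comp_const_apply] at hf ⊢
  rw [Kernel.integral_comp hf, Kernel.const_apply]

end KernelIntegral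

section SuppFn

variable {Ω' R : Type*} [MeasurableSpace Ω'] [TopologicalSpace R] [MeasurableSpace R]
  {C : Ω' → Set (ProbabilityMeasure R)} {w : Ω'}

lemma suppFn_smul {c : ℝ} (hc : 0 ≤ c) (g : R →ᵇ ℝ) :
    suppFn C w (c • g) = c * suppFn C w g := by
  unfold suppFn
  rw [← smul_eq_mul, ← Real.sSup_smul_of_nonneg hc, ← image_smul, image_image]
  simp only [coe_smul, smul_eq_mul, integral_const_mul]

lemma suppFn_le (hne : (C w).Nonempty) {g : R →ᵇ ℝ} {c : ℝ}
    (h : ∀ μ ∈ C w, ∫ r, g r ∂(μ : Measure R) ≤ c) : suppFn C w g ≤ c :=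
  csSup_le (hne.image _) (forall_mem_image.2 h)

lemma suppFn_nonpos {g : R →ᵇ ℝ} (hg : g ≤ 0) : suppFn C w g ≤ 0 :=
  Real.sSup_nonpos (forall_mem_image.2 fun _ _ => integral_nonpos hg)

lemma suppFn_const (hne : (C w).Nonempty) (c : ℝ) :
    suppFn C w (BoundedContinuousFunction.const R c) = c := by
  simp only [suppFn, const_apply, integral_const, probReal_univ, one_smul, hne.image_const,
    csSup_singleton]

variable [OpensMeasurableSpace R]

lemma abs_integral_le_norm (μ : ProbabilityMeasure R) (g : R →ᵇ ℝ) :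
    |∫ r, g r ∂(μ : Measure R)| ≤ ‖g‖ :=
  norm_integral_le_norm (μ : Measure R) g

lemma integral_le_suppFn {μ : ProbabilityMeasure R} (hμ : μ ∈ C w) (g : R →ᵇ ℝ) :
    ∫ r, g r ∂(μ : Measure R) ≤ suppFn C w g :=
  le_csSup ⟨‖g‖, forall_mem_image.2 fun ν _ => (abs_le.1 (abs_integral_le_norm ν g)).2⟩
    (mem_image_of_mem _ hμ)

lemma abs_suppFn_le_norm (hne : (C w).Nonempty) (g : R →ᵇ ℝ) : |suppFn C w g| ≤ ‖g‖ := by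
  obtain ⟨μ, hμ⟩ := hne
  exact abs_le.2 ⟨(abs_le.1 (abs_integral_le_norm μ g)).1.trans (integral_le_suppFn hμ g),
    suppFn_le ⟨μ, hμ⟩ fun ν _ => (abs_le.1 (abs_integral_le_norm ν g)).2⟩

lemma suppFn_add_le (hne : (C w).Nonempty) (g h : R →ᵇ ℝ) :
    suppFn C w (g + h) ≤ suppFn C w g + suppFn C w h :=
  suppFn_le hne fun μ hμ => by
    rw [← integralFunctional_apply, map_add]
    exact add_le_add (integral_le_suppFn hμ g) (integral_le_suppFn hμ h)

lemma continuous_suppFn (hne : (C w).Nonempty) : Continuous fun g : R →ᵇ ℝ => suppFn C w g := by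
  refine (LipschitzWith.of_le_add fun g h => ?_).continuous
  calc suppFn C w g = suppFn C w (h + (g - h)) := by rw [add_sub_cancel]
    _ ≤ suppFn C w h + suppFn C w (g - h) := suppFn_add_le hne _ _
    _ ≤ suppFn C w h + dist g h := by
      rw [dist_eq_norm]
      gcongr
      exact (abs_le.1 (abs_suppFn_le_norm hne _)).2

variable {P : Measure Ω'} [IsFiniteMeasure P]

lemma integrable_suppFn_simpleFunc (hne : ∀ w, (C w).Nonempty)
    (hmeas : ∀ g : R →ᵇ ℝ, Measurable fun w => suppFn C w g) (f : SimpleFunc Ω' (R →ᵇ ℝ)) :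
    Integrable (fun w => suppFn C w (f w)) P := by
  obtain ⟨c, hc⟩ := (f.map norm).exists_forall_le
  exact Integrable.of_bound
    (SimpleFunc.measurable_bind f (fun g w => suppFn C w g) hmeas).aestronglyMeasurable c
    (ae_of_all _ fun w => (abs_suppFn_le_norm (hne w) (f w)).trans (hc w))

lemma integrable_suppFn (hne : ∀ w, (C w).Nonempty)
    (hmeas : ∀ g : R →ᵇ ℝ, Measurable fun w => suppFn C w g) (g : R →ᵇ ℝ) :
    Integrable (fun w => suppFn C w g) P :=
  integrable_suppFn_simpleFunc hne hmeas (SimpleFunc.const Ω' g)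

lemma integral_bind_le_integral_suppFn (hne : ∀ w, (C w).Nonempty)
    (hmeas : ∀ g : R →ᵇ ℝ, Measurable fun w => suppFn C w g) {κ : Kernel Ω' R} [IsMarkovKernel κ]
    (hκ : ∀ᵐ w ∂P, ∃ μ ∈ C w, (μ : Measure R) = κ w) (g : R →ᵇ ℝ) :
    ∫ r, g r ∂P.bind κ ≤ ∫ w, suppFn C w g ∂P := by
  have hg : Integrable g (P.bind κ) := g.integrable _
  rw [integral_bind_of_integrable hg]
  refine integral_mono_ae (integrable_integral_of_integrable_bind hg)
    (integrable_suppFn hne hmeas g) ?_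
  filter_upwards [hκ] with w ⟨μ, hμ, hμκ⟩
  exact hμκ ▸ integral_le_suppFn hμ g

end SuppFn

lemma exists_linearMap_apply_eq_of_le_sublinear {E F : Type*} [AddCommGroup E] [Module ℝ E]
    [AddCommGroup F] [Module ℝ F] (i : F →ₗ[ℝ] E) (φ : F →ₗ[ℝ] ℝ) (N : E → ℝ)
    (N_hom : ∀ c : ℝ, 0 < c → ∀ x, N (c • x) = c * N x)
    (N_add : ∀ x y, N (x + y) ≤ N x + N y) (hφ : ∀ x, φ x ≤ N (i x)) :
    ∃ l : E →ₗ[ℝ] ℝ, (∀ x, l (i x) = φ x) ∧ ∀ x, l x ≤ N x := by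
  have N_zero : N 0 = 0 := by
    have := N_hom 2 two_pos 0
    rw [smul_zero] at this
    linarith
  have φ_nonpos : ∀ x, i x = 0 → φ x ≤ 0 := fun x hx => by simpa only [hx, N_zero] using hφ x
  have ker_le : LinearMap.ker i ≤ LinearMap.ker φ := fun x hx => by
    rw [LinearMap.mem_ker] at hx ⊢
    have := φ_nonpos (-x) (by rw [map_neg, hx, neg_zero])
    rw [map_neg] at this
    exact le_antisymm (φ_nonpos x hx) (by linarith)
  have φ_mem : φ ∈ LinearMap.range i.dualMap := by
    rw [LinearMap.range_dualMap_eq_dualAnnihilator_ker, Submodule.mem_dualAnnihilator]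
    exact fun x hx => ker_le hx
  obtain ⟨ψ, rfl⟩ := φ_mem
  obtain ⟨l, hl, hlN⟩ := exists_extension_of_le_sublinear (ψ.toPMap (LinearMap.range i)) N
    N_hom N_add (by rintro ⟨_, x, rfl⟩; exact hφ x)
  exact ⟨l, fun x => hl ⟨i x, LinearMap.mem_range_self i x⟩, hlN⟩

section SimpleFunc

variable {α E : Type*} [MeasurableSpace α] [AddCommGroup E] [Module ℝ E]

/-- The linear map `x ↦ 1_A ⊗ x` from vectors to simple functions. As for `SimpleFunc.restrict`,
it is `0` when `A` is not measurable. -/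
def indicatorSimpleFunc (A : Set α) : E →ₗ[ℝ] SimpleFunc α E where
  toFun x := (SimpleFunc.const α x).restrict A
  map_add' x y := by
    by_cases hA : MeasurableSet A
    · ext w
      by_cases hw : w ∈ A <;> simp [hA, hw]
    · simp only [SimpleFunc.restrict_of_not_measurable hA, add_zero]
  map_smul' c x := by
    by_cases hA : MeasurableSet A
    · ext w
      by_cases hw : w ∈ A <;> simp [hA, hw]
    · simp only [SimpleFunc.restrict_of_not_measurable hA, smul_zero]

lemma indicatorSimpleFunc_apply {A : Set α} (hA : MeasurableSet A) (x : E) (w : α) :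
    indicatorSimpleFunc A x w = A.indicator (fun _ => x) w :=
  SimpleFunc.restrict_apply _ hA w

lemma indicatorSimpleFunc_union {A B : Set α} (hA : MeasurableSet A) (hB : MeasurableSet B)
    (hAB : Disjoint A B) (x : E) :
    indicatorSimpleFunc (A ∪ B) x = indicatorSimpleFunc A x + indicatorSimpleFunc B x := by
  ext w
  simp only [SimpleFunc.coe_add, Pi.add_apply, indicatorSimpleFunc_apply hA,
    indicatorSimpleFunc_apply hB, indicatorSimpleFunc_apply (hA.union hB),
    indicator_union_of_disjoint hAB]

end SimpleFunc

section Dominated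

variable {Ω' R : Type*} [MeasurableSpace Ω'] [TopologicalSpace R] [MeasurableSpace R]
  {C : Ω' → Set (ProbabilityMeasure R)} {P : Measure Ω'}

/-- A finitely additive family of functionals on `C_b(R)`, indexed by the measurable subsets of
`Ω'`, such that the functional at `A` is dominated by `g ↦ ∫_A H_w[g] P(dw)`. Values at
non-measurable sets are irrelevant. -/
structure IsDominatedBySuppFn (C : Ω' → Set (ProbabilityMeasure R)) (P : Measure Ω')
    (L : Set Ω' → (R →ᵇ ℝ) →ₗ[ℝ] ℝ) : Prop where
  union : ∀ {A B : Set Ω'}, MeasurableSet A → MeasurableSet B → Disjoint A B →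
    L (A ∪ B) = L A + L B
  le_setIntegral : ∀ {A : Set Ω'}, MeasurableSet A → ∀ g, L A g ≤ ∫ w in A, suppFn C w g ∂P

/-- The sublinear functional `f ↦ ∫ H_w[f w] P(dw)` on the simple functions `f : Ω' → C_b(R)`. -/
def integralSuppFn (C : Ω' → Set (ProbabilityMeasure R)) (P : Measure Ω')
    (f : SimpleFunc Ω' (R →ᵇ ℝ)) : ℝ :=
  ∫ w, suppFn C w (f w) ∂P

lemma integralSuppFn_smul {c : ℝ} (hc : 0 ≤ c) (f : SimpleFunc Ω' (R →ᵇ ℝ)) :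
    integralSuppFn C P (c • f) = c * integralSuppFn C P f := by
  simp only [integralSuppFn, SimpleFunc.coe_smul, Pi.smul_apply, suppFn_smul hc,
    integral_const_mul]

lemma integralSuppFn_indicatorSimpleFunc {A : Set Ω'} (hA : MeasurableSet A) (g : R →ᵇ ℝ) :
    integralSuppFn C P (indicatorSimpleFunc A g) = ∫ w in A, suppFn C w g ∂P := by
  have suppFn_zero : ∀ w, suppFn C w 0 = 0 := fun w => by
    simpa only [zero_smul, zero_mul] using suppFn_smul (C := C) (w := w) le_rfl 0
  rw [integralSuppFn, ← integral_indicator hA]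
  congr with w
  rw [indicatorSimpleFunc_apply hA]
  by_cases hw : w ∈ A <;> simp [hw, suppFn_zero]

lemma integralSuppFn_add_le [OpensMeasurableSpace R] [IsFiniteMeasure P]
    (hne : ∀ w, (C w).Nonempty) (hmeas : ∀ g : R →ᵇ ℝ, Measurable fun w => suppFn C w g)
    (f f' : SimpleFunc Ω' (R →ᵇ ℝ)) :
    integralSuppFn C P (f + f') ≤ integralSuppFn C P f + integralSuppFn C P f' := by
  have hint := integrable_suppFn_simpleFunc (P := P) hne hmeas
  unfold integralSuppFn
  rw [← integral_add (hint f) (hint f')]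
  refine integral_mono (hint (f + f')) ((hint f).add (hint f')) fun w => ?_
  exact suppFn_add_le (hne w) (f w) (f' w)

lemma exists_isDominatedBySuppFn_of_integral_le [OpensMeasurableSpace R] [IsFiniteMeasure P]
    (hne : ∀ w, (C w).Nonempty) (hmeas : ∀ g : R →ᵇ ℝ, Measurable fun w => suppFn C w g)
    {Q : Measure R} [IsFiniteMeasure Q]
    (hQ : ∀ g : R →ᵇ ℝ, ∫ r, g r ∂Q ≤ ∫ w, suppFn C w g ∂P) :
    ∃ L, IsDominatedBySuppFn C P L ∧ ∀ g, L univ g = ∫ r, g r ∂Q := by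
  have hQ' (g) : (integralFunctional Q).toLinearMap g ≤
      integralSuppFn C P (indicatorSimpleFunc univ g) := by
    rw [integralSuppFn_indicatorSimpleFunc .univ, Measure.restrict_univ]
    exact hQ g
  obtain ⟨l, hl, hlN⟩ := exists_linearMap_apply_eq_of_le_sublinear (indicatorSimpleFunc univ)
    (integralFunctional Q).toLinearMap (integralSuppFn C P)
    (fun c hc f => by rw [integralSuppFn_smul hc.le]) (integralSuppFn_add_le hne hmeas) hQ'
  refine ⟨fun A => l ∘ₗ indicatorSimpleFunc A, ⟨fun hA hB hAB => ?_, fun hA g => ?_⟩, hl⟩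
  · ext g
    simp only [LinearMap.comp_apply, LinearMap.add_apply, indicatorSimpleFunc_union hA hB hAB,
      map_add]
  · exact (hlN _).trans_eq (integralSuppFn_indicatorSimpleFunc hA g)

namespace IsDominatedBySuppFn

variable {L : Set Ω' → (R →ᵇ ℝ) →ₗ[ℝ] ℝ} {A : Set Ω'}

lemma nonneg (hL : IsDominatedBySuppFn C P L) (hA : MeasurableSet A) {g : R →ᵇ ℝ}
    (hg : 0 ≤ g) : 0 ≤ L A g := by
  have hneg : L A (-g) ≤ 0 := (hL.le_setIntegral hA (-g)).trans
    (integral_nonpos fun w => suppFn_nonpos (neg_nonpos.2 hg))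
  rwa [map_neg, neg_nonpos] at hneg

lemma apply_le_apply_univ (hL : IsDominatedBySuppFn C P L) (hA : MeasurableSet A) {g : R →ᵇ ℝ}
    (hg : 0 ≤ g) : L A g ≤ L univ g := by
  rw [← union_compl_self A, hL.union hA hA.compl disjoint_compl_right, LinearMap.add_apply]
  exact le_add_of_nonneg_right (hL.nonneg hA.compl hg)

lemma apply_one (hL : IsDominatedBySuppFn C P L) (hne : ∀ w, (C w).Nonempty)
    (hA : MeasurableSet A) : L A 1 = P.real A := by
  have le_const : ∀ c : ℝ, L A (BoundedContinuousFunction.const R c) ≤ P.real A * c := fun c => by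
    simpa only [suppFn_const (hne _), setIntegral_const, smul_eq_mul] using
      hL.le_setIntegral hA (BoundedContinuousFunction.const R c)
  have h_one : L A 1 ≤ P.real A * 1 := le_const 1
  have h_neg_one : L A (-1) ≤ P.real A * (-1) := le_const (-1)
  rw [map_neg] at h_neg_one
  linarith

end IsDominatedBySuppFn

end Dominated

section PositiveFunctional

lemma abs_map_le_map_abs {E : Type*} [AddCommGroup E] [Lattice E] [IsOrderedAddMonoid E]
    [Module ℝ E] (L : E →ₗ[ℝ] ℝ) (hL : ∀ x, 0 ≤ x → 0 ≤ L x) (x : E) : |L x| ≤ L |x| := by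
  have L_mono : Monotone L := fun a b hab => by
    simpa only [map_sub, sub_nonneg] using hL (b - a) (sub_nonneg.2 hab)
  refine abs_le'.2 ⟨L_mono (le_abs_self x), ?_⟩
  rw [← map_neg]
  exact L_mono (neg_le_abs x)

lemma Lp_two_nonneg_of_forall_inner_nonneg {α : Type*} [MeasurableSpace α] {μ : Measure α}
    [IsFiniteMeasure μ] {h : Lp ℝ 2 μ} (hh : ∀ x : Lp ℝ 2 μ, 0 ≤ x → 0 ≤ inner ℝ h x) :
    0 ≤ h := by
  refine (Lp.coeFn_nonneg h).1 (ae_nonneg_of_forall_setIntegral_nonneg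
    ((Lp.memLp h).integrable one_le_two) fun B hB hBfin => ?_)
  rw [← L2.inner_indicatorConstLp_one (𝕜 := ℝ) hB hBfin.ne h, real_inner_comm]
  refine hh _ ((Lp.coeFn_nonneg _).1 ?_)
  filter_upwards [indicatorConstLp_coeFn (p := 2) (hs := hB) (hμs := hBfin.ne) (c := (1 : ℝ))]
    with r hr
  rw [hr]
  exact indicator_nonneg (fun _ _ => zero_le_one) r

variable {R : Type*} [TopologicalSpace R] [MeasurableSpace R] [BorelSpace R] {Q : Measure R}
  [IsFiniteMeasure Q]

lemma toLp_abs (g : R →ᵇ ℝ) : toLp 2 Q ℝ |g| = |toLp 2 Q ℝ g| := by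
  refine Lp.ext ?_
  filter_upwards [coeFn_toLp 2 Q ℝ g, coeFn_toLp 2 Q ℝ |g|, Lp.coeFn_abs (toLp 2 Q ℝ g)]
    with r hg hg_abs h_abs
  rw [h_abs, hg, hg_abs]
  rfl

lemma integral_abs_le_norm_toLp_mul (g : R →ᵇ ℝ) :
    ∫ r, |g| r ∂Q ≤ ‖toLp 2 Q ℝ (1 : R →ᵇ ℝ)‖ * ‖toLp 2 Q ℝ g‖ :=
  calc ∫ r, |g| r ∂Q = inner ℝ (toLp 2 Q ℝ (1 : R →ᵇ ℝ)) (toLp 2 Q ℝ |g|) := by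
        rw [inner_toLp]
        simp
    _ ≤ ‖toLp 2 Q ℝ (1 : R →ᵇ ℝ)‖ * ‖toLp 2 Q ℝ |g|‖ := real_inner_le_norm _ _
    _ = ‖toLp 2 Q ℝ (1 : R →ᵇ ℝ)‖ * ‖toLp 2 Q ℝ g‖ := by rw [toLp_abs, norm_abs_eq_norm]

variable [NormalSpace R] [Q.WeaklyRegular] {L : (R →ᵇ ℝ) →ₗ[ℝ] ℝ}

lemma exists_nonneg_inner_toLp_eq (hL_nonneg : ∀ g, 0 ≤ g → 0 ≤ L g)
    (hL_le : ∀ g, 0 ≤ g → L g ≤ ∫ r, g r ∂Q) :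
    ∃ h : Lp ℝ 2 Q, 0 ≤ h ∧ ∀ g, inner ℝ h (toLp 2 Q ℝ g) = L g := by
  have hdense : DenseRange (toLp 2 Q ℝ : (R →ᵇ ℝ) →L[ℝ] Lp ℝ 2 Q) :=
    toLp_denseRange ℝ Q ℝ (by simp)
  have hbound : ∀ g, ‖L g‖ ≤ ‖toLp 2 Q ℝ (1 : R →ᵇ ℝ)‖ * ‖toLp 2 Q ℝ g‖ := fun g =>
    ((abs_map_le_map_abs L hL_nonneg g).trans (hL_le |g| (abs_nonneg g))).trans
      (integral_abs_le_norm_toLp_mul g)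
  let T : Lp ℝ 2 Q →L[ℝ] ℝ := L.extendOfNorm (toLp 2 Q ℝ).toLinearMap
  have hT : ∀ g, T (toLp 2 Q ℝ g) = L g := L.extendOfNorm_eq hdense ⟨_, hbound⟩
  have hT_abs : ∀ x, 0 ≤ T |x| := fun x => by
    refine hdense.induction (P := fun x => 0 ≤ T |x|) ?_ ?_ x
    · rintro _ ⟨g, rfl⟩
      rw [← toLp_abs, hT]
      exact hL_nonneg _ (abs_nonneg g)
    · exact isClosed_le continuous_const
        (T.continuous.comp (continuous_id.sup continuous_id.neg))
  let h := (InnerProductSpace.toDual ℝ (Lp ℝ 2 Q)).symm T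
  have hh : ∀ x, inner ℝ h x = T x := fun x => InnerProductSpace.toDual_symm_apply
  refine ⟨h, Lp_two_nonneg_of_forall_inner_nonneg fun x hx => ?_, fun g => (hh _).trans (hT g)⟩
  rw [hh, ← abs_of_nonneg hx]
  exact hT_abs x

lemma exists_isFiniteMeasure_integral_eq (hL_nonneg : ∀ g, 0 ≤ g → 0 ≤ L g)
    (hL_le : ∀ g, 0 ≤ g → L g ≤ ∫ r, g r ∂Q) :
    ∃ μ : Measure R, IsFiniteMeasure μ ∧ ∀ g : R →ᵇ ℝ, ∫ r, g r ∂μ = L g := by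
  obtain ⟨h, h_nonneg, hhL⟩ := exists_nonneg_inner_toLp_eq hL_nonneg hL_le
  have h_int : Integrable h Q := (Lp.memLp h).integrable one_le_two
  refine ⟨Q.withDensity fun r => ENNReal.ofReal (h r),
    isFiniteMeasure_withDensity_ofReal h_int.2, fun g => ?_⟩
  rw [integral_withDensity_eq_integral_toReal_smul₀
    h_int.aestronglyMeasurable.aemeasurable.ennreal_ofReal (ae_of_all _ fun _ => by simp),
    ← hhL, L2.inner_def]
  refine integral_congr_ae ?_
  filter_upwards [(Lp.coeFn_nonneg h).2 h_nonneg, coeFn_toLp 2 Q ℝ g] with r h_nonneg_r hg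
  rw [ENNReal.toReal_ofReal h_nonneg_r, hg]
  exact mul_comm _ _

end PositiveFunctional

lemma exists_measure_eq_of_additive_of_le {α : Type*} [MeasurableSpace α] {P : Measure α}
    [IsFiniteMeasure P] (m : Set α → ℝ≥0∞)
    (hm_union : ∀ {A B}, MeasurableSet A → MeasurableSet B → Disjoint A B →
      m (A ∪ B) = m A + m B)
    (hm_le : ∀ {A}, MeasurableSet A → m A ≤ P A) :
    ∃ ν : Measure α, ∀ {A}, MeasurableSet A → ν A = m A := by
  have isSetRing : IsSetRing {A : Set α | MeasurableSet A} :=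
    ⟨.empty, fun _ _ => .union, fun _ _ => .diff⟩
  have m_empty : m ∅ = 0 := by simpa only [measure_empty, nonpos_iff_eq_zero] using hm_le .empty
  have tendsto_zero : ∀ ⦃s : ℕ → Set α⦄ (_ : ∀ n, MeasurableSet (s n)), Antitone s →
      ⋂ n, s n = ∅ → Tendsto (fun n => m (s n)) atTop (𝓝 0) := fun s hs hs_anti hs_inter => by
    have hP : Tendsto (fun n => P (s n)) atTop (𝓝 0) := by
      simpa only [hs_inter, measure_empty, Function.comp_def] using
        tendsto_measure_iInter_atTop (μ := P) (fun n => (hs n).nullMeasurableSet) hs_anti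
          ⟨0, measure_ne_top P _⟩
    exact tendsto_of_tendsto_of_tendsto_of_le_of_le tendsto_const_nhds hP (fun _ => zero_le)
      fun n => hm_le (hs n)
  exact ⟨Measure.ofMeasurable (fun A _ => m A) m_empty fun s hs hs_disj =>
      addContent_iUnion_eq_sum_of_tendsto_zero isSetRing
        (isSetRing.addContent_of_union m m_empty hm_union)
        (fun A hA => ((hm_le hA).trans_lt (measure_lt_top P A)).ne) tendsto_zero hs (.iUnion hs)
        hs_disj,
    fun hA => Measure.ofMeasurable_apply _ hA⟩

/-- A finitely additive family `A ↦ M A` of measures on `R`, indexed by the measurable subsets of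
`Ω'`, such that `M A` has total mass `P A`. It plays the role of a measure on `Ω' × R` with
marginal `P` on `Ω'`, `M A B` being the mass of `A × B`. -/
structure IsBimeasure {Ω' R : Type*} [MeasurableSpace Ω'] [MeasurableSpace R] (P : Measure Ω')
    (M : Set Ω' → Measure R) : Prop where
  union : ∀ {A B : Set Ω'}, MeasurableSet A → MeasurableSet B → Disjoint A B →
    M (A ∪ B) = M A + M B
  measure_univ : ∀ {A : Set Ω'}, MeasurableSet A → M A univ = P A

namespace IsBimeasure

variable {Ω' R : Type*} [MeasurableSpace Ω'] [MeasurableSpace R] {P : Measure Ω'}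
  {M : Set Ω' → Measure R}

lemma map {S : Type*} [MeasurableSpace S] (hM : IsBimeasure P M) {f : R → S} (hf : Measurable f) :
    IsBimeasure P fun A => (M A).map f where
  union hA hB hAB := by rw [hM.union hA hB hAB, Measure.map_add _ _ hf]
  measure_univ hA := by rw [Measure.map_apply hf .univ, preimage_univ, hM.measure_univ hA]

variable [IsFiniteMeasure P]

lemma exists_density (hM : IsBimeasure P M) (B : Set R) :
    ∃ d : Ω' → ℝ≥0∞, Measurable d ∧
      ∀ {A}, MeasurableSet A → ∫⁻ w in A, d w ∂P = M A B := by
  have slice_le : ∀ {A}, MeasurableSet A → M A B ≤ P A := fun hA =>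
    (measure_mono (subset_univ B)).trans_eq (hM.measure_univ hA)
  obtain ⟨ν, hν⟩ := exists_measure_eq_of_additive_of_le (fun A => M A B)
    (fun hA hA' hAA' => by rw [hM.union hA hA' hAA', Measure.add_apply]) slice_le
  have hνP : ν ≤ P := Measure.le_iff.2 fun A hA => (hν hA).trans_le (slice_le hA)
  have : IsFiniteMeasure ν := isFiniteMeasure_of_le P hνP
  exact ⟨ν.rnDeriv P, Measure.measurable_rnDeriv ν P, fun {A} hA =>
    (Measure.setLIntegral_rnDeriv (Measure.absolutelyContinuous_of_le hνP) A).trans (hν hA)⟩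

lemma exists_monotone_density {ι : Type*} [Countable ι] [Preorder ι] (hM : IsBimeasure P M)
    {B : ι → Set R} (hB : Monotone B) :
    ∃ d : ι → Ω' → ℝ≥0∞, (∀ i, Measurable (d i)) ∧ Monotone d ∧ d ≤ 1 ∧
      ∀ i {A}, MeasurableSet A → ∫⁻ w in A, d i w ∂P = M A (B i) := by
  choose d₀ hd₀_meas hd₀ using fun i => hM.exists_density (B i)
  have d₀_le_one : ∀ᵐ w ∂P, ∀ i, d₀ i w ≤ 1 := ae_all_iff.2 fun i =>
    ae_le_of_forall_setLIntegral_le_of_sigmaFinite (hd₀_meas i) fun A hA _ => by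
      rw [hd₀ i hA, setLIntegral_one, ← hM.measure_univ hA]
      exact measure_mono (subset_univ _)
  have d₀_mono : ∀ᵐ w ∂P, ∀ i j, i ≤ j → d₀ i w ≤ d₀ j w := by
    simp only [ae_all_iff]
    refine fun i j hij => ae_le_of_forall_setLIntegral_le_of_sigmaFinite (hd₀_meas i) ?_
    intro A hA _
    rw [hd₀ i hA, hd₀ j hA]
    exact measure_mono (hB hij)
  refine ⟨fun i w => ⨆ j : Iic i, min (d₀ j w) 1,
    fun i => .iSup fun j => (hd₀_meas j).min measurable_const,
    fun i i' hii' w => iSup_mono' fun j => ⟨⟨j, j.2.trans hii'⟩, le_rfl⟩,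
    fun i w => iSup_le fun j => min_le_right _ _, fun i A hA => ?_⟩
  rw [← hd₀ i hA]
  refine lintegral_congr_ae (ae_restrict_of_ae ?_)
  filter_upwards [d₀_le_one, d₀_mono] with w hw_le hw_mono
  exact le_antisymm (iSup_le fun j => (min_le_left _ _).trans (hw_mono _ _ j.2))
    (le_iSup_of_le (⟨i, le_rfl⟩ : Iic i) (le_min le_rfl (hw_le i)))

end IsBimeasure

section RatCDF

variable {Ω' : Type*} [MeasurableSpace Ω'] {P : Measure Ω'} {G : Measure ℝ} [IsFiniteMeasure G]
  {d : ℚ → Ω' → ℝ≥0∞}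

lemma iInf_measure_Iic_rat_gt (t : ℚ) : ⨅ r : Ioi t, G (Iic ((r : ℚ) : ℝ)) = G (Iic (t : ℝ)) := by
  have Iic_mono : Monotone fun r : Ioi t => Iic ((r : ℚ) : ℝ) :=
    fun _ _ hab => Rat.cast_mono.Iic hab
  rw [← Iic_mono.measure_iInter (fun _ => measurableSet_Iic.nullMeasurableSet)
    ⟨⟨t + 1, lt_add_one t⟩, measure_ne_top G _⟩]
  congr with x
  simp only [mem_iInter, mem_Iic, Subtype.forall, mem_Ioi]
  refine ⟨fun h => le_of_forall_lt_rat_imp_le fun q htq => h q (mod_cast htq), fun h q htq => ?_⟩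
  exact h.trans (mod_cast htq.le)

lemma ae_iSup_eq_one (hd : ∀ q, Measurable (d q)) (hd_mono : Monotone d) (hd_le : d ≤ 1)
    (hd_int : ∀ q : ℚ, ∫⁻ w, d q w ∂P = G (Iic (q : ℝ))) (hG : G univ = P univ) :
    ∀ᵐ w ∂P, ⨆ q, d q w = 1 := by
  have lintegral_iSup_eq : ∫⁻ w, ⨆ q, d q w ∂P = G univ := by
    rw [lintegral_iSup_directed (fun q => (hd q).aemeasurable) hd_mono.directed_le,
      ← Real.iUnion_Iic_rat, (Rat.cast_mono (K := ℝ)).Iic.measure_iUnion]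
    exact iSup_congr hd_int
  refine ae_eq_of_ae_le_of_lintegral_le (ae_of_all _ fun w => iSup_le fun q => hd_le q w) ?_
    aemeasurable_const ?_
  · exact lintegral_iSup_eq ▸ measure_ne_top G univ
  · rw [lintegral_iSup_eq, hG, lintegral_one]

lemma ae_iInf_eq_zero (hd : ∀ q, Measurable (d q))
    (hd_int : ∀ q : ℚ, ∫⁻ w, d q w ∂P = G (Iic (q : ℝ))) :
    ∀ᵐ w ∂P, ⨅ q, d q w = 0 := by
  refine (lintegral_eq_zero_iff (Measurable.iInf hd)).1 (nonpos_iff_eq_zero.1 ?_)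
  calc ∫⁻ w, ⨅ q, d q w ∂P ≤ ⨅ q : ℚ, G (Iic (q : ℝ)) :=
        le_iInf fun q => (lintegral_mono fun w => iInf_le _ q).trans_eq (hd_int q)
    _ = G (⋂ q : ℚ, Iic (q : ℝ)) := ((Rat.cast_mono (K := ℝ)).Iic.measure_iInter
        (fun q => measurableSet_Iic.nullMeasurableSet) ⟨0, measure_ne_top G _⟩).symm
    _ = 0 := by rw [Real.iInter_Iic_rat, measure_empty]

lemma ae_iInf_Ioi_eq (hd : ∀ q, Measurable (d q)) (hd_mono : Monotone d)
    (hd_int : ∀ q : ℚ, ∫⁻ w, d q w ∂P = G (Iic (q : ℝ))) :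
    ∀ᵐ w ∂P, ∀ t : ℚ, ⨅ r : Ioi t, d r w = d t w := by
  refine ae_all_iff.2 fun t => EventuallyEq.symm ?_
  refine ae_eq_of_ae_le_of_lintegral_le
    (ae_of_all _ fun w => le_iInf fun r => hd_mono (le_of_lt r.2) w)
    (hd_int t ▸ measure_ne_top G _) (Measurable.iInf fun r : Ioi t => hd r).aemeasurable ?_
  rw [hd_int, ← iInf_measure_Iic_rat_gt]
  exact le_iInf fun r => (lintegral_mono fun w => iInf_le _ r).trans_eq (hd_int r)

lemma ae_isRatStieltjesPoint (hd : ∀ q, Measurable (d q)) (hd_mono : Monotone d) (hd_le : d ≤ 1)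
    (hd_int : ∀ q : ℚ, ∫⁻ w, d q w ∂P = G (Iic (q : ℝ))) (hG : G univ = P univ) :
    ∀ᵐ w ∂P, IsRatStieltjesPoint (fun w q => (d q w).toReal) w := by
  have d_ne_top : ∀ q w, d q w ≠ ∞ := fun q w => ne_top_of_le_ne_top ENNReal.one_ne_top (hd_le q w)
  filter_upwards [ae_iSup_eq_one hd hd_mono hd_le hd_int hG, ae_iInf_eq_zero hd hd_int,
    ae_iInf_Ioi_eq hd hd_mono hd_int] with w h_iSup h_iInf h_right
  have dw_mono : Monotone fun q => d q w := fun a b hab => hd_mono hab w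
  refine ⟨fun a b hab => ENNReal.toReal_mono (d_ne_top b w) (dw_mono hab), ?_, ?_, fun t => ?_⟩
  · exact (ENNReal.tendsto_toReal ENNReal.one_ne_top).comp (h_iSup ▸ tendsto_atTop_iSup dw_mono)
  · exact (ENNReal.tendsto_toReal ENNReal.zero_ne_top).comp (h_iInf ▸ tendsto_atBot_iInf dw_mono)
  · rw [← h_right t, ENNReal.toReal_iInf fun r : Ioi t => d_ne_top r w]

end RatCDF

namespace IsBimeasure

variable {Ω' R : Type*} [MeasurableSpace Ω'] [MeasurableSpace R] {P : Measure Ω'}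
  [IsFiniteMeasure P]

lemma exists_isMarkovKernel_real {M : Set Ω' → Measure ℝ} (hM : IsBimeasure P M) :
    ∃ κ : Kernel Ω' ℝ, IsMarkovKernel κ ∧
      ∀ {A}, MeasurableSet A → (P.restrict A).bind κ = M A := by
  have M_finite : ∀ {A}, MeasurableSet A → IsFiniteMeasure (M A) := fun hA =>
    ⟨hM.measure_univ hA ▸ measure_lt_top P _⟩
  have := M_finite .univ
  obtain ⟨d, hd_meas, hd_mono, hd_le, hd⟩ := hM.exists_monotone_density (Rat.cast_mono (K := ℝ)).Iic
  have hd_stieltjes := ae_isRatStieltjesPoint hd_meas hd_mono hd_le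
    (fun q => by simpa only [Measure.restrict_univ] using hd q .univ) (hM.measure_univ .univ)
  have hF : Measurable fun w q => (d q w).toReal :=
    measurable_pi_lambda _ fun q => (hd_meas q).ennreal_toReal
  let κ : Kernel Ω' ℝ := ⟨fun w => (stieltjesOfMeasurableRat _ hF w).measure,
    measurable_measure_stieltjesOfMeasurableRat hF⟩
  have hκ : IsMarkovKernel κ := ⟨fun w => ⟨measure_stieltjesOfMeasurableRat_univ hF w⟩⟩
  have κ_Iic : ∀ q : ℚ, ∀ᵐ w ∂P, κ w (Iic (q : ℝ)) = d q w := fun q => by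
    filter_upwards [hd_stieltjes] with w hw
    refine (measure_stieltjesOfMeasurableRat_Iic hF w q).trans ?_
    rw [stieltjesOfMeasurableRat_eq, toRatCDF_of_isRatStieltjesPoint hw]
    exact ENNReal.ofReal_toReal (ne_top_of_le_ne_top ENNReal.one_ne_top (hd_le q w))
  refine ⟨κ, hκ, fun {A} hA => ?_⟩
  have := M_finite hA
  refine ext_of_generate_finite _ Real.borel_eq_generateFrom_Iic_rat Real.isPiSystem_Iic_rat
    (fun B hB => ?_) ?_
  · obtain ⟨q, rfl⟩ := mem_iUnion.1 hB
    rw [Measure.bind_apply measurableSet_Iic κ.aemeasurable, ← hd q hA]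
    exact lintegral_congr_ae (ae_restrict_of_ae (κ_Iic q))
  · rw [Measure.bind_apply .univ κ.aemeasurable, hM.measure_univ hA]
    simp only [MeasureTheory.measure_univ, lintegral_one, Measure.restrict_apply_univ]

lemma exists_isMarkovKernel [StandardBorelSpace R] [Nonempty R] {M : Set Ω' → Measure R}
    (hM : IsBimeasure P M) :
    ∃ κ : Kernel Ω' R, IsMarkovKernel κ ∧
      ∀ {A}, MeasurableSet A → (P.restrict A).bind κ = M A := by
  have he := measurableEmbedding_embeddingReal R
  obtain ⟨s, hs, hse⟩ := he.exists_measurable_extend measurable_id fun _ => inferInstance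
  obtain ⟨κ, hκ, hκM⟩ := (hM.map he.measurable).exists_isMarkovKernel_real
  refine ⟨κ.map s, Kernel.IsMarkovKernel.map κ hs, fun hA => ?_⟩
  rw [← Measure.map_comp _ _ hs, hκM hA, Measure.map_map hs he.measurable, hse, Measure.map_id]

end IsBimeasure

section WeakTopology

variable {R : Type*} [TopologicalSpace R] [MeasurableSpace R]

lemma exists_countable_isOpen_lt_measure [SecondCountableTopology R] :
    ∃ 𝒰 : Set (Set R), 𝒰.Countable ∧ (∀ U ∈ 𝒰, IsOpen U) ∧
      ∀ (ν : ProbabilityMeasure R) {G : Set R} {c : ℝ≥0}, IsOpen G → c < ν G →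
        ∃ U ∈ 𝒰, U ⊆ G ∧ c < ν U := by
  refine ⟨sUnion '' {T | T.Finite ∧ T ⊆ countableBasis R},
    (countable_ofPred_finite_subset (countable_countableBasis R)).image _,
    forall_mem_image.2 fun T hT => isOpen_sUnion fun s hs => isOpen_of_mem_countableBasis (hT.2 hs),
    fun ν G c hG hc => ?_⟩
  obtain ⟨T, hT, hcT, hTG⟩ := ν.exists_lt_measure_biUnion_of_isOpen (S := countableBasis R)
    (fun u hu x hx => by
      obtain ⟨s, hs, hxs, hsu⟩ := (isBasis_countableBasis R).exists_subset_of_mem_open hx hu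
      exact ⟨s, hs, (isOpen_of_mem_countableBasis hs).mem_nhds hxs, hsu⟩) hG hc
  refine ⟨⋃₀ T, mem_image_of_mem _ ⟨T.finite_toSet, hT⟩, ?_⟩
  simp only [sUnion_eq_biUnion, Finset.mem_coe]
  exact ⟨hTG, hcT⟩

variable [OpensMeasurableSpace R]

lemma exists_tendsto_integral_measure_isOpen [HasOuterApproxClosed R] {U : Set R} (hU : IsOpen U) :
    ∃ g : ℕ → (R →ᵇ ℝ), ∀ ν : ProbabilityMeasure R,
      (∀ n, ∫ r, g n r ∂(ν : Measure R) ≤ ν U) ∧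
        Tendsto (fun n => ∫ r, g n r ∂(ν : Measure R)) atTop (𝓝 (ν U : ℝ)) := by
  let f : ℕ → (R →ᵇ ℝ≥0) := hU.isClosed_compl.apprSeq
  let f' : ℕ → (R →ᵇ ℝ) := fun n => (f n).comp _ (LipschitzWith.subtype_val {x : ℝ | 0 ≤ x})
  refine ⟨fun n => 1 - f' n, fun ν => ?_⟩
  have integral_f' (n : ℕ) :
      ∫ r, f' n r ∂(ν : Measure R) = (∫⁻ r, f n r ∂(ν : Measure R)).toReal :=
    (toReal_lintegral_coe_eq_integral (f n) ν).symm
  have integral_sub_f' (n : ℕ) :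
      ∫ r, (1 - f' n) r ∂(ν : Measure R) = 1 - (∫⁻ r, f n r ∂(ν : Measure R)).toReal := by
    rw [← integralFunctional_apply, map_sub, integralFunctional_apply, integralFunctional_apply,
      integral_f']
    simp only [coe_one, Pi.one_apply, integral_const, probReal_univ, one_smul]
  have measure_U : (ν U : ℝ) = 1 - (ν : Measure R).real Uᶜ := by
    rw [probReal_compl_eq_one_sub hU.measurableSet, sub_sub_cancel]
    rfl
  simp only [integral_sub_f', measure_U]
  refine ⟨fun n => sub_le_sub_left (ENNReal.toReal_mono ?_ ?_) _, tendsto_const_nhds.sub ?_⟩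
  · exact (lintegral_lt_top_of_nnreal _ (f n)).ne
  · exact HasOuterApproxClosed.measure_le_lintegral hU.isClosed_compl ν n
  · exact (ENNReal.tendsto_toReal (measure_ne_top _ _)).comp
      (HasOuterApproxClosed.tendsto_lintegral_apprSeq hU.isClosed_compl ν)

lemma exists_countable_isInducing_integral [SecondCountableTopology R] [HasOuterApproxClosed R] :
    ∃ D : Set (R →ᵇ ℝ), D.Countable ∧
      IsInducing fun (ν : ProbabilityMeasure R) (g : D) =>
        ∫ r, (g : R →ᵇ ℝ) r ∂(ν : Measure R) := by
  obtain ⟨𝒰, h𝒰, h𝒰_open, h𝒰_lt⟩ := exists_countable_isOpen_lt_measure (R := R)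
  choose! g hg using fun U (hU : U ∈ 𝒰) => exists_tendsto_integral_measure_isOpen (h𝒰_open U hU)
  let D : Set (R →ᵇ ℝ) := ⋃ U ∈ 𝒰, range (g U)
  have hD : D.Countable := h𝒰.biUnion fun U _ => countable_range (g U)
  have := hD.to_subtype
  refine ⟨D, hD, isInducing_iff_nhds.2 fun μ => le_antisymm ?_ ?_⟩
  · exact (continuous_pi fun h =>
      ProbabilityMeasure.continuous_integral_boundedContinuousFunction _).tendsto μ |>.le_comap
  set Φ := fun (ν : ProbabilityMeasure R) (h : D) => ∫ r, (h : R →ᵇ ℝ) r ∂(ν : Measure R)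
  let l := comap Φ (𝓝 (Φ μ))
  have tendsto_integral (h : D) : Tendsto (fun ν => Φ ν h) l (𝓝 (Φ μ h)) :=
    tendsto_pi_nhds.1 tendsto_comap h
  suffices Tendsto id l (𝓝 μ) from this
  rcases l.eq_or_neBot with hbot | hne
  · simp only [hbot, tendsto_bot]
  refine tendsto_of_forall_isOpen_le_liminf fun G hG => (le_liminf_iff
    (isCoboundedUnder_ge_of_le (x := 1) l fun ν => ν.apply_le_one G) (by isBoundedDefault)).2
      fun c hc => ?_
  obtain ⟨U, hU, hUG, hcU⟩ := h𝒰_lt μ hG hc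
  obtain ⟨n, hn⟩ := ((hg U hU μ).2.eventually_const_lt (NNReal.coe_lt_coe.2 hcU)).exists
  filter_upwards [(tendsto_integral ⟨g U n, mem_biUnion hU (mem_range_self n)⟩).eventually_const_lt
    hn] with ν hν
  exact NNReal.coe_lt_coe.1 ((hν.trans_le ((hg U hU ν).1 n)).trans_le
    (NNReal.coe_le_coe.2 (ν.apply_mono hUG)))

end WeakTopology

section Separation

lemma toLinearMap_mem_span_range_proj {ι 𝕜 : Type*} [NontriviallyNormedField 𝕜]
    (f : (ι → 𝕜) →L[𝕜] 𝕜) :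
    f.toLinearMap ∈ Submodule.span 𝕜
      (range fun i => (LinearMap.proj i : (ι → 𝕜) →ₗ[𝕜] 𝕜)) :=
  (LinearMap.mem_span_iff_continuous _).2 f.continuous

variable {R ι : Type*} [TopologicalSpace R] [MeasurableSpace R] [OpensMeasurableSpace R]

lemma exists_mem_span_integral_eq (g : ι → (R →ᵇ ℝ)) (f : (ι → ℝ) →L[ℝ] ℝ) :
    ∃ h ∈ Submodule.span ℝ (range g), ∀ (ν : Measure R) [IsFiniteMeasure ν],
      ∫ r, h r ∂ν = f fun i => ∫ r, g i r ∂ν := by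
  suffices ∀ φ ∈ Submodule.span ℝ (range fun i => (LinearMap.proj i : (ι → ℝ) →ₗ[ℝ] ℝ)),
      ∃ h ∈ Submodule.span ℝ (range g), ∀ (ν : Measure R) [IsFiniteMeasure ν],
        integralFunctional ν h = φ fun i => integralFunctional ν (g i) from
    this f (toLinearMap_mem_span_range_proj f)
  intro φ hφ
  induction hφ using Submodule.span_induction with
  | mem _ hφ =>
    obtain ⟨i, rfl⟩ := hφ
    exact ⟨g i, Submodule.subset_span (mem_range_self i), fun ν _ => rfl⟩
  | zero => exact ⟨0, zero_mem _, fun ν _ => map_zero _⟩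
  | add φ ψ _ _ hφ hψ =>
    obtain ⟨h, hh, hφ⟩ := hφ
    obtain ⟨k, hk, hψ⟩ := hψ
    exact ⟨h + k, add_mem hh hk, fun ν _ => by rw [map_add, hφ, hψ, LinearMap.add_apply]⟩
  | smul c φ _ hφ =>
    obtain ⟨h, hh, hφ⟩ := hφ
    exact ⟨c • h, Submodule.smul_mem _ c hh, fun ν _ => by
      rw [map_smul, hφ, LinearMap.smul_apply]⟩

lemma ConvexMeasSet.convex_image_integral {S : Set (ProbabilityMeasure R)} (hS : ConvexMeasSet S)
    (g : ι → (R →ᵇ ℝ)) :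
    Convex ℝ ((fun (ν : ProbabilityMeasure R) i => ∫ r, g i r ∂(ν : Measure R)) '' S) := by
  rintro _ ⟨ν₁, hν₁, rfl⟩ _ ⟨ν₂, hν₂, rfl⟩ a b ha hb hab
  lift a to ℝ≥0 using ha
  lift b to ℝ≥0 using hb
  norm_cast at hab
  let ν : Measure R := a • (ν₁ : Measure R) + b • (ν₂ : Measure R)
  have hν : IsProbabilityMeasure ν := ⟨by
    simp only [ν, Measure.coe_add, Measure.coe_nnreal_smul_apply, Pi.add_apply, measure_univ,
      mul_one]
    exact_mod_cast hab⟩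
  refine ⟨⟨ν, hν⟩, hS ν₁ hν₁ ν₂ hν₂ a b hab _ rfl, funext fun i => ?_⟩
  change ∫ r, g i r ∂(a • (ν₁ : Measure R) + b • (ν₂ : Measure R)) = _
  rw [integral_add_measure ((g i).integrable _) ((g i).integrable _),
    integral_smul_nnreal_measure, integral_smul_nnreal_measure]
  rfl

variable {Ω' : Type*} [MeasurableSpace Ω'] {C : Ω' → Set (ProbabilityMeasure R)} {w : Ω'}
  {μ : ProbabilityMeasure R}

lemma mem_of_forall_mem_span_integral_le_suppFn {g : ι → (R →ᵇ ℝ)}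
    (hg : IsInducing fun (ν : ProbabilityMeasure R) i => ∫ r, g i r ∂(ν : Measure R))
    (hne : (C w).Nonempty) (hclosed : IsClosed (C w)) (hconv : ConvexMeasSet (C w))
    (hμ : ∀ h ∈ Submodule.span ℝ (range g), ∫ r, h r ∂(μ : Measure R) ≤ suppFn C w h) :
    μ ∈ C w := by
  rw [← hclosed.closure_eq, hg.closure_eq_preimage_closure_image]
  by_contra hμC
  obtain ⟨f, c, hfc, hcf⟩ := geometric_hahn_banach_closed_point
    (hconv.convex_image_integral g).closure isClosed_closure hμC
  obtain ⟨h, hh, hhf⟩ := exists_mem_span_integral_eq g f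
  have suppFn_le_c : suppFn C w h ≤ c := suppFn_le hne fun ν hν => by
    rw [hhf]
    exact (hfc _ (subset_closure (mem_image_of_mem _ hν))).le
  exact hcf.not_ge ((hhf μ).symm.trans_le ((hμ h hh).trans suppFn_le_c))

variable (R) in
lemma exists_countable_forall_mem_of_integral_le_suppFn [SecondCountableTopology R]
    [HasOuterApproxClosed R] :
    ∃ D : Set (R →ᵇ ℝ), D.Countable ∧
      ∀ {Ω' : Type*} [MeasurableSpace Ω'] {C : Ω' → Set (ProbabilityMeasure R)} {w : Ω'}
        {μ : ProbabilityMeasure R}, (C w).Nonempty → IsClosed (C w) → ConvexMeasSet (C w) →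
        (∀ g ∈ D, ∫ r, g r ∂(μ : Measure R) ≤ suppFn C w g) → μ ∈ C w := by
  obtain ⟨D, hD, hD_inducing⟩ := exists_countable_isInducing_integral (R := R)
  obtain ⟨D', hD', hDD'⟩ := hD.isSeparable.span (R := ℝ)
  refine ⟨D', hD', fun {Ω' _ C w μ} hne hclosed hconv hμ =>
    mem_of_forall_mem_span_integral_le_suppFn hD_inducing hne hclosed hconv fun h hh => ?_⟩
  have isClosed_le_suppFn :
      IsClosed {g : R →ᵇ ℝ | integralFunctional (μ : Measure R) g ≤ suppFn C w g} :=
    isClosed_le (integralFunctional _).continuous (continuous_suppFn hne)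
  rw [Subtype.range_coe] at hh
  exact closure_minimal hμ isClosed_le_suppFn (hDD' hh)

end Separation

section KernelDomination

variable {Ω' R : Type*} [MeasurableSpace Ω'] [TopologicalSpace R] [MeasurableSpace R]
  [BorelSpace R] {C : Ω' → Set (ProbabilityMeasure R)} {P : Measure Ω'} [IsFiniteMeasure P]

lemma IsDominatedBySuppFn.exists_isBimeasure [PseudoMetrizableSpace R]
    {L : Set Ω' → (R →ᵇ ℝ) →ₗ[ℝ] ℝ} (hL : IsDominatedBySuppFn C P L)
    (hne : ∀ w, (C w).Nonempty) {Q : Measure R} [IsFiniteMeasure Q]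
    (hQ : ∀ g, L univ g = ∫ r, g r ∂Q) :
    ∃ M : Set Ω' → Measure R, IsBimeasure P M ∧
      ∀ {A}, MeasurableSet A → ∀ g : R →ᵇ ℝ, ∫ r, g r ∂M A = L A g := by
  have exists_measure (A : Set Ω') (hA : MeasurableSet A) :
      ∃ μ : Measure R, IsFiniteMeasure μ ∧ ∀ g : R →ᵇ ℝ, ∫ r, g r ∂μ = L A g :=
    exists_isFiniteMeasure_integral_eq (fun g hg => hL.nonneg hA hg)
      fun g hg => (hL.apply_le_apply_univ hA hg).trans_eq (hQ g)
  choose! M hM_finite hM_integral using exists_measure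
  refine ⟨M, ⟨fun {A B} hA hB hAB => ?_, fun {A} hA => ?_⟩, fun {A} hA => hM_integral A hA⟩
  · have := hM_finite A hA
    have := hM_finite B hB
    have := hM_finite (A ∪ B) (hA.union hB)
    refine ext_of_forall_integral_eq_of_IsFiniteMeasure fun g => ?_
    rw [integral_add_measure (g.integrable _) (g.integrable _), hM_integral A hA,
      hM_integral B hB, hM_integral _ (hA.union hB), hL.union hA hB hAB, LinearMap.add_apply]
  · have := hM_finite A hA
    have mass : (M A).real univ = P.real A := by
      rw [← hL.apply_one hne hA, ← hM_integral A hA]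
      simp only [coe_one, Pi.one_apply, integral_const, smul_eq_mul, mul_one]
    exact (measureReal_eq_measureReal_iff).1 mass

lemma ae_integral_le_suppFn_of_bind_restrict (hne : ∀ w, (C w).Nonempty)
    (hmeas : ∀ g : R →ᵇ ℝ, Measurable fun w => suppFn C w g) {κ : Kernel Ω' R} [IsMarkovKernel κ]
    {g : R →ᵇ ℝ} (hκ : ∀ {A}, MeasurableSet A →
      ∫ r, g r ∂(P.restrict A).bind κ ≤ ∫ w in A, suppFn C w g ∂P) :
    ∀ᵐ w ∂P, ∫ r, g r ∂κ w ≤ suppFn C w g := by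
  refine ae_le_of_forall_setIntegral_le (integrable_integral_of_integrable_bind (g.integrable _))
    (integrable_suppFn hne hmeas g) fun A hA _ => ?_
  rw [← integral_bind_of_integrable (g.integrable _)]
  exact hκ hA

lemma exists_isMarkovKernel_of_integral_le [PseudoMetrizableSpace R] [StandardBorelSpace R]
    [Nonempty R] (hne : ∀ w, (C w).Nonempty)
    (hmeas : ∀ g : R →ᵇ ℝ, Measurable fun w => suppFn C w g) {Q : Measure R} [IsFiniteMeasure Q]
    (hQ : ∀ g : R →ᵇ ℝ, ∫ r, g r ∂Q ≤ ∫ w, suppFn C w g ∂P) :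
    ∃ κ : Kernel Ω' R, IsMarkovKernel κ ∧ P.bind κ = Q ∧
      ∀ g : R →ᵇ ℝ, ∀ᵐ w ∂P, ∫ r, g r ∂κ w ≤ suppFn C w g := by
  obtain ⟨L, hL, hL_univ⟩ := exists_isDominatedBySuppFn_of_integral_le hne hmeas hQ
  obtain ⟨M, hM, hM_integral⟩ := hL.exists_isBimeasure hne hL_univ
  obtain ⟨κ, hκ, hκM⟩ := hM.exists_isMarkovKernel
  refine ⟨κ, hκ, ext_of_forall_integral_eq_of_IsFiniteMeasure fun g => ?_, fun g =>
    ae_integral_le_suppFn_of_bind_restrict hne hmeas fun {A} hA => ?_⟩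
  · rw [← hL_univ g, ← hM_integral .univ g, ← hκM .univ, Measure.restrict_univ]
  · rw [hκM hA, hM_integral hA]
    exact hL.le_setIntegral hA g

end KernelDomination

theorem strassen_general
    {Ω' : Type*} [MeasurableSpace Ω']
    {R : Type*} [TopologicalSpace R] [PseudoMetrizableSpace R] [SecondCountableTopology R]
    [MeasurableSpace R] [BorelSpace R] [StandardBorelSpace R]
    (C : Ω' → Set (ProbabilityMeasure R))
    (hCne : ∀ w, (C w).Nonempty)
    (hCclosed : ∀ w, IsClosed (C w))
    (hCconv : ∀ w, ConvexMeasSet (C w))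
    (hCmeas : ∀ g : R →ᵇ ℝ, Measurable fun w => suppFn C w g)
    (P : Measure Ω') [IsProbabilityMeasure P]
    (Q : Measure R) [IsFiniteMeasure Q] :
    (∃ m : Kernel Ω' R, IsMarkovKernel m ∧
        (∀ B : Set R, MeasurableSet B → Q B = ∫⁻ w, m w B ∂P) ∧
        (∀ᵐ w ∂P, ∃ μ ∈ C w, (μ : Measure R) = m w)) ↔
      (∀ g : R →ᵇ ℝ, ∫ r, g r ∂Q ≤ ∫ w, suppFn C w g ∂P) := by
  have eq_bind_iff (m : Kernel Ω' R) :
      (∀ B : Set R, MeasurableSet B → Q B = ∫⁻ w, m w B ∂P) ↔ P.bind m = Q := by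
    simp +contextual only [Measure.ext_iff, Measure.bind_apply _ m.aemeasurable, eq_comm]
  simp only [eq_bind_iff]
  constructor
  · rintro ⟨m, hm, rfl, hmC⟩
    exact integral_bind_le_integral_suppFn hCne hCmeas hmC
  · intro hQ
    obtain ⟨w₀⟩ := P.nonempty_of_neZero
    have : Nonempty R := (hCne w₀).some.nonempty
    obtain ⟨m, hm, hmQ, hm_le⟩ := exists_isMarkovKernel_of_integral_le hCne hCmeas hQ
    obtain ⟨D, hD, mem_of_le⟩ := exists_countable_forall_mem_of_integral_le_suppFn R
    refine ⟨m, hm, hmQ, ?_⟩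
    filter_upwards [(ae_ball_iff hD).2 fun g _ => hm_le g] with w hw
    exact ⟨⟨m w, inferInstance⟩, mem_of_le (hCne w) (hCclosed w) (hCconv w) hw, rfl⟩

/-- **Strassen's theorem.**  Let `(Ω, Ξ)` be a measurable space, `R` a Polish space,
and `C : w ↦ C_w` a set-valued map with nonempty convex compact values in the Borel
probability measures on `R`, measurable in the sense that `w ↦ H_w[g]` is measurable
for every bounded continuous `g`.  For probability measures `P` on `Ω` and `Q` on `R`,
there exists a Markov kernel `𝔪` from `Ω` to `R` with `𝔪 · P = Q` and
`𝔪(·, w) ∈ C_w` for `P`-a.e. `w` iff `∫ g dQ ≤ ∫ H_w[g] dP` for all `g ∈ C_b(R)`. -/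
theorem strassen
    {Ω' : Type*} [MeasurableSpace Ω']
    {R : Type*} [TopologicalSpace R] [PolishSpace R] [MeasurableSpace R] [BorelSpace R]
    (C : Ω' → Set (ProbabilityMeasure R))
    (hCne : ∀ w, (C w).Nonempty)
    (hCcpt : ∀ w, IsCompact (C w))
    (hCconv : ∀ w, ConvexMeasSet (C w))
    (hCmeas : ∀ g : BoundedContinuousFunction R ℝ, Measurable fun w => suppFn C w g)
    (P : Measure Ω') [IsProbabilityMeasure P]
    (Q : Measure R) [IsProbabilityMeasure Q] :
    (∃ m : ProbabilityTheory.Kernel Ω' R, ProbabilityTheory.IsMarkovKernel m ∧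
        (∀ B : Set R, MeasurableSet B → Q B = ∫⁻ w, m w B ∂P) ∧
        (∀ᵐ w ∂P, ∃ μ ∈ C w, (μ : Measure R) = m w)) ↔
      (∀ g : BoundedContinuousFunction R ℝ,
        ∫ r, g r ∂Q ≤ ∫ w, suppFn C w g ∂P) :=
  strassen_general C hCne (fun w => (hCcpt w).isClosed) hCconv hCmeas P Q
end
end

section
/- Let X be a Polish space, Ω = C([0,∞) → X) with the compact-open topology, 𝒫 the space of Borel probability measures on Ω with the weak topology, and let 𝒞 : X → 2^𝒫 have nonempty compact convex values with {x : 𝒞(x) ∩ K ≠ ∅} Borel for every closed K ⊆ 𝒫. For f ∈ C_b(Ω) let h_x[f] = sup{P f : P ∈ 𝒞(x)}, and for P ∈ 𝒫, s ≥ 0 set K(P, s, 𝒞) = {Q ∈ 𝒫 : Q f ≤ ∫ h_{w(s)}[f] P(dw) for all f ∈ C_b(Ω)}. For a continuous linear functional η on 𝒫 and a compact convex K ⊆ 𝒫, let V_η[K] = {P ∈ K : η(P) = sup_{Q ∈ K} η(Q)}, and let V_η[𝒞] denote x ↦ V_η[𝒞(x)]. Then for any continuous linear functional η on 𝒫, V_η[K(P,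 s, 𝒞)] = K(P, s, V_η[𝒞]). -/
open MeasureTheory Set
open scoped NNReal

noncomputable section

variable {X : Type*} [TopologicalSpace X]

/-- `Q f = ∫ f dQ` for a bounded continuous `f` on path space. -/
def intBCF (f : BoundedContinuousFunction (IPath X) ℝ)
    (Q : ProbabilityMeasure (IPath X)) : ℝ :=
  ∫ w, f w ∂(Q : Measure (IPath X))

/-- The support function `h_x[f] = sup {P f : P ∈ 𝒞 x}`. -/
def hSupp (C : X → Set (ProbabilityMeasure (IPath X))) (x : X)
    (f : BoundedContinuousFunction (IPath X) ℝ) : ℝ :=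
  sSup (intBCF f '' C x)

/-- The set `K(P, s, 𝒞) = {Q : Q f ≤ ∫ h_{w(s)}[f] dP, ∀ f ∈ C_b(Ω)}`. -/
def Kset (C : X → Set (ProbabilityMeasure (IPath X)))
    (P : ProbabilityMeasure (IPath X)) (s : ℝ≥0) :
    Set (ProbabilityMeasure (IPath X)) :=
  {Q | ∀ f : BoundedContinuousFunction (IPath X) ℝ,
    intBCF f Q ≤ ∫ w, hSupp C (w s) f ∂(P : Measure (IPath X))}

/-- The set `V_η[K]` of maximizers of `η` over `K`. -/
def Vmax {α : Type*} (η : α → ℝ) (K : Set α) : Set α :=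
  {P ∈ K | ∀ Q ∈ K, η Q ≤ η P}

/-! A continuous affine functional on probability measures is integration against a bounded
continuous function `g`: its values at Dirac masses are bounded and continuous, and a closed convex
set of measures containing all Dirac masses contains every measure. Write `h_y[f]` for the support
function of `C y`, and `M = ∫ h_y[g] dμ(y)`. Every mixture `Q` of `C` has `Q g ≤ M`. Mixtures of
`V_g[C]` have `Q g = M`, as one sees by testing against `-g`, and they exist by measurable
selection: maximizing successively a measure-determining sequence of test functions singles out,
measurably in `y`, one element of `C y`. Conversely, if `Q` is a mixture of `C` with `Q g = M`,
testing against `f + t • g` gives `Q f ≤ ∫ (h_y[f + t • g] - t * h_y[g]) dμ(y)`, and as `t → ∞` the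
integrand converges to the support function of `V_g[C y]` by compactness. -/

open Filter Topology TopologicalSpace ProbabilityTheory
open scoped BoundedContinuousFunction

section Maximizers

variable {α : Type*} {K : Set α} {u v : α → ℝ} {t : ℝ}

lemma Vmax_subset (v : α → ℝ) (K : Set α) : Vmax v K ⊆ K := fun _ hx => hx.1

lemma Vmax_eq_of_isGreatest {M : ℝ} (hM : IsGreatest (v '' K) M) :
    Vmax v K = {x ∈ K | v x = M} := by
  obtain ⟨⟨z, hz, rfl⟩, hmax⟩ := hM
  ext x
  exact and_congr_right fun hx => ⟨fun h => (hmax ⟨x, hx, rfl⟩).antisymm (h z hz),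
    fun h y hy => h ▸ hmax ⟨y, hy, rfl⟩⟩

/-- Successive maximization of `v 0, v 1, …` over `K`: the set of points that are lexicographically
maximal for the first `k` functions. -/
def iterVmax (v : ℕ → α → ℝ) (K : Set α) : ℕ → Set α
  | 0 => K
  | k + 1 => Vmax (v k) (iterVmax v K k)

/-- The value of maximizing `u` over `K` with the constraint that `v` be maximal relaxed to a
penalty `t * (v - sup v)`, written as a difference of suprema of combinations of `u` and `v`. -/
def penalizedSup (u v : α → ℝ) (K : Set α) (t : ℝ) : ℝ :=
  sSup ((fun x => u x + t * v x) '' K) - t * sSup (v '' K)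

variable [TopologicalSpace α]

lemma isGreatest_sSup_image (hK : IsCompact K) (hne : K.Nonempty) (hv : Continuous v) :
    IsGreatest (v '' K) (sSup (v '' K)) :=
  (hK.image hv).isGreatest_sSup (hne.image v)

lemma le_sSup_image (hK : IsCompact K) (hv : Continuous v) {x : α} (hx : x ∈ K) :
    v x ≤ sSup (v '' K) :=
  le_csSup (hK.image hv).bddAbove ⟨x, hx, rfl⟩

lemma Vmax_eq_sep_eq_sSup (hK : IsCompact K) (hne : K.Nonempty) (hv : Continuous v) :
    Vmax v K = {x ∈ K | v x = sSup (v '' K)} :=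
  Vmax_eq_of_isGreatest (isGreatest_sSup_image hK hne hv)

lemma Vmax_nonempty (hK : IsCompact K) (hne : K.Nonempty) (hv : Continuous v) :
    (Vmax v K).Nonempty :=
  hK.exists_isMaxOn hne hv.continuousOn

lemma isCompact_Vmax (hK : IsCompact K) (hne : K.Nonempty) (hv : Continuous v) :
    IsCompact (Vmax v K) := by
  rw [Vmax_eq_sep_eq_sSup hK hne hv]
  exact hK.inter_right (isClosed_eq hv continuous_const)

lemma exists_mem_penalizedSup_eq (hK : IsCompact K) (hne : K.Nonempty) (hu : Continuous u)
    (hv : Continuous v) (t : ℝ) :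
    ∃ x ∈ K, penalizedSup u v K t = u x + t * (v x - sSup (v '' K)) := by
  have hcont : Continuous fun x => u x + t * v x := by fun_prop
  obtain ⟨x, hx, hmax⟩ := hK.exists_sSup_image_eq hne hcont.continuousOn
  refine ⟨x, hx, ?_⟩
  rw [penalizedSup, hmax]
  ring

lemma le_penalizedSup (hK : IsCompact K) (hu : Continuous u) (hv : Continuous v) {x : α}
    (hx : x ∈ Vmax v K) : u x ≤ penalizedSup u v K t := by
  have hvx : v x = sSup (v '' K) := by
    have hmem := hx
    rw [Vmax_eq_sep_eq_sSup hK ⟨x, hx.1⟩ hv] at hmem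
    exact hmem.2
  have hcont : Continuous fun x => u x + t * v x := by fun_prop
  have hle := le_sSup_image hK hcont hx.1
  rw [penalizedSup, ← hvx]
  linarith

lemma sSup_image_Vmax_le_penalizedSup (hK : IsCompact K) (hne : K.Nonempty) (hu : Continuous u)
    (hv : Continuous v) : sSup (u '' Vmax v K) ≤ penalizedSup u v K t :=
  csSup_le ((Vmax_nonempty hK hne hv).image u) <|
    forall_mem_image.2 fun _ hx => le_penalizedSup hK hu hv hx

lemma abs_penalizedSup_le (hK : IsCompact K) (hne : K.Nonempty) (hu : Continuous u)
    (hv : Continuous v) {B : ℝ} (hB : ∀ x ∈ K, |u x| ≤ B) (ht : 0 ≤ t) :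
    |penalizedSup u v K t| ≤ B := by
  obtain ⟨z, hz⟩ := Vmax_nonempty hK hne hv
  obtain ⟨x, hx, hval⟩ := exists_mem_penalizedSup_eq hK hne hu hv t
  have hpenalty : t * (v x - sSup (v '' K)) ≤ 0 :=
    mul_nonpos_of_nonneg_of_nonpos ht (sub_nonpos.2 (le_sSup_image hK hv hx))
  refine abs_le.2 ⟨(abs_le.1 (hB z hz.1)).1.trans (le_penalizedSup hK hu hv hz), ?_⟩
  linarith [(abs_le.1 (hB x hx)).2]

lemma exists_pos_forall_le_sub (hK : IsCompact K) (hu : Continuous u) (hv : Continuous v)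
    {a m : ℝ} (hlt : ∀ x ∈ K, a ≤ u x → v x < m) :
    ∃ δ > 0, ∀ x ∈ K, a ≤ u x → v x ≤ m - δ := by
  have hT : IsCompact (K ∩ {x | a ≤ u x}) := hK.inter_right (isClosed_le continuous_const hu)
  rcases (K ∩ {x | a ≤ u x}).eq_empty_or_nonempty with hempty | hne
  · exact ⟨1, one_pos, fun x hx hax => absurd ⟨hx, hax⟩ (hempty ▸ notMem_empty x)⟩
  · obtain ⟨z, hz, hmax⟩ := hT.exists_isMaxOn hne hv.continuousOn
    refine ⟨m - v z, sub_pos.2 (hlt z hz.1 hz.2), fun x hx hax => ?_⟩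
    rw [sub_sub_cancel]
    exact hmax ⟨hx, hax⟩

lemma tendsto_penalizedSup_atTop (hK : IsCompact K) (hne : K.Nonempty) (hu : Continuous u)
    (hv : Continuous v) :
    Tendsto (penalizedSup u v K) atTop (𝓝 (sSup (u '' Vmax v K))) := by
  refine tendsto_order.2 ⟨fun a ha => .of_forall fun t =>
    ha.trans_le (sSup_image_Vmax_le_penalizedSup hK hne hu hv), fun a ha => ?_⟩
  have hlt : ∀ x ∈ K, a ≤ u x → v x < sSup (v '' K) := by
    refine fun x hx hax => (le_sSup_image hK hv hx).lt_of_ne fun hvx => ?_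
    have hxV : x ∈ Vmax v K := by
      rw [Vmax_eq_sep_eq_sSup hK hne hv]
      exact ⟨hx, hvx⟩
    exact absurd (hax.trans (le_sSup_image (isCompact_Vmax hK hne hv) hu hxV)) ha.not_ge
  obtain ⟨δ, hδ, hgap⟩ := exists_pos_forall_le_sub hK hu hv hlt
  filter_upwards [eventually_ge_atTop 0, eventually_gt_atTop ((sSup (u '' K) - a) / δ)]
    with t ht hlarge
  obtain ⟨x, hx, hval⟩ := exists_mem_penalizedSup_eq hK hne hu hv t
  rw [div_lt_iff₀ hδ] at hlarge
  rw [hval]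
  by_contra! hge
  have hax : a ≤ u x := by nlinarith [le_sSup_image hK hv hx]
  nlinarith [hgap x hx hax, le_sSup_image hK hu hx]

lemma isCompact_iterVmax_and_nonempty {v : ℕ → α → ℝ} (hK : IsCompact K) (hne : K.Nonempty)
    (hv : ∀ k, Continuous (v k)) (k : ℕ) :
    IsCompact (iterVmax v K k) ∧ (iterVmax v K k).Nonempty := by
  induction k with
  | zero => exact ⟨hK, hne⟩
  | succ k ih => exact ⟨isCompact_Vmax ih.1 ih.2 (hv k), Vmax_nonempty ih.1 ih.2 (hv k)⟩

lemma nonempty_iInter_iterVmax [T2Space α] {v : ℕ → α → ℝ} (hK : IsCompact K) (hne : K.Nonempty)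
    (hv : ∀ k, Continuous (v k)) : (⋂ k, iterVmax v K k).Nonempty := by
  have hiter := isCompact_iterVmax_and_nonempty hK hne hv
  exact IsCompact.nonempty_iInter_of_sequence_nonempty_isCompact_isClosed _
    (fun k => Vmax_subset (v k) _) (fun k => (hiter k).2) hK fun k => (hiter k).1.isClosed

end Maximizers

section Expectation

variable {Ω : Type*} [TopologicalSpace Ω] [MeasurableSpace Ω]

/-- `Q f = ∫ f dQ` for a bounded continuous `f` on an arbitrary space, extending `intBCF`. -/
def expect (f : Ω →ᵇ ℝ) (Q : ProbabilityMeasure Ω) : ℝ := ∫ w, f w ∂(Q : Measure Ω)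

/-- The support function `h_S[f] = sup {Q f : Q ∈ S}` of a set of probability measures, so that
`hSupp C x` is the support function of `C x`. -/
def support (S : Set (ProbabilityMeasure Ω)) (f : Ω →ᵇ ℝ) : ℝ := sSup (expect f '' S)

lemma expect_neg (f : Ω →ᵇ ℝ) (Q : ProbabilityMeasure Ω) : expect (-f) Q = -expect f Q :=
  integral_neg f

variable [OpensMeasurableSpace Ω]

lemma continuous_expect (f : Ω →ᵇ ℝ) : Continuous (expect f) :=
  ProbabilityMeasure.continuous_integral_boundedContinuousFunction f

lemma abs_expect_le_norm (f : Ω →ᵇ ℝ) (Q : ProbabilityMeasure Ω) : |expect f Q| ≤ ‖f‖ :=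
  f.norm_integral_le_norm (Q : Measure Ω)

lemma expect_add_smul (f g : Ω →ᵇ ℝ) (c : ℝ) (Q : ProbabilityMeasure Ω) :
    expect (f + c • g) Q = expect f Q + c * expect g Q := by
  have hf := f.integrable (Q : Measure Ω)
  have hg := g.integrable (Q : Measure Ω)
  exact (integral_add hf (hg.const_mul c)).trans (by rw [integral_const_mul]; rfl)

variable {S T : Set (ProbabilityMeasure Ω)}

lemma expect_le_support (hS : IsCompact S) (f : Ω →ᵇ ℝ) {Q : ProbabilityMeasure Ω} (hQ : Q ∈ S) :
    expect f Q ≤ support S f :=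
  le_sSup_image hS (continuous_expect f) hQ

lemma support_mono (hT : IsCompact T) (hne : S.Nonempty) (hST : S ⊆ T) (f : Ω →ᵇ ℝ) :
    support S f ≤ support T f :=
  csSup_le_csSup (hT.image (continuous_expect f)).bddAbove (hne.image _) (image_mono hST)

lemma abs_support_le_norm (hS : IsCompact S) (hne : S.Nonempty) (f : Ω →ᵇ ℝ) :
    |support S f| ≤ ‖f‖ := by
  obtain ⟨Q, -, hQ⟩ := hS.exists_sSup_image_eq hne (continuous_expect f).continuousOn
  rw [support, hQ]
  exact abs_expect_le_norm f Q

lemma support_Vmax_neg (hS : IsCompact S) (hne : S.Nonempty) (g : Ω →ᵇ ℝ) :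
    support (Vmax (expect g) S) (-g) = -support S g := by
  obtain ⟨Q, hQ, hval⟩ := (isCompact_Vmax hS hne (continuous_expect g)).exists_sSup_image_eq
    (Vmax_nonempty hS hne (continuous_expect g)) (continuous_expect (-g)).continuousOn
  rw [Vmax_eq_sep_eq_sSup hS hne (continuous_expect g)] at hQ
  rw [support, hval, expect_neg, hQ.2, support]

lemma penalizedSup_expect (f g : Ω →ᵇ ℝ) (S : Set (ProbabilityMeasure Ω)) (t : ℝ) :
    penalizedSup (expect f) (expect g) S t = support S (f + t • g) - t * support S g := by
  simp only [penalizedSup, support, ← expect_add_smul]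

end Expectation

section AffineFunctionals

variable {Ω : Type*} [MeasurableSpace Ω]

/-- Affine functionals on probability measures, the restrictions of linear functionals on
measures. As in `ConvexMeasSet`, convex combinations are named by the equation `R = a • P + b • Q`
because probability measures carry no addition. -/
def IsAffineFunctional (η : ProbabilityMeasure Ω → ℝ) : Prop :=
  ∀ P Q : ProbabilityMeasure Ω, ∀ a b : ℝ≥0, a + b = 1 →
    ∀ R : ProbabilityMeasure Ω, (R : Measure Ω) = a • (P : Measure Ω) + b • (Q : Measure Ω) →
      η R = (a : ℝ) * η P + (b : ℝ) * η Q

lemma exists_eq_smul_add_smul (P Q : ProbabilityMeasure Ω) {a b : ℝ≥0} (hab : a + b = 1) :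
    ∃ R : ProbabilityMeasure Ω, (R : Measure Ω) = a • (P : Measure Ω) + b • (Q : Measure Ω) := by
  refine ⟨⟨a • (P : Measure Ω) + b • (Q : Measure Ω), ⟨?_⟩⟩, rfl⟩
  simp only [Measure.add_apply, Measure.smul_apply, measure_univ, ENNReal.smul_def, smul_eq_mul,
    mul_one]
  exact_mod_cast hab

lemma IsAffineFunctional.convexMeasSet_eqLocus {η ζ : ProbabilityMeasure Ω → ℝ}
    (hη : IsAffineFunctional η) (hζ : IsAffineFunctional ζ) :
    ConvexMeasSet {P | η P = ζ P} := by
  intro P hP Q hQ a b hab R hR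
  change η R = ζ R
  rw [hη P Q a b hab R hR, hζ P Q a b hab R hR, hP, hQ]

lemma IsAffineFunctional.sub_eq {η : ProbabilityMeasure Ω → ℝ} (hη : IsAffineFunctional η)
    {P Q R : ProbabilityMeasure Ω} {a b : ℝ≥0} (hab : a + b = 1)
    (hR : (R : Measure Ω) = a • (P : Measure Ω) + b • (Q : Measure Ω)) :
    η R - η P = b * (η Q - η P) := by
  have ha : (a : ℝ) = 1 - b := eq_sub_of_add_eq (mod_cast hab)
  rw [hη P Q a b hab R hR, ha]
  ring

lemma ConvexMeasSet.convex_image_toSignedMeasure {S : Set (ProbabilityMeasure Ω)}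
    (hS : ConvexMeasSet S) :
    Convex ℝ ((fun P : ProbabilityMeasure Ω => (P : Measure Ω).toSignedMeasure) '' S) := by
  rintro _ ⟨P, hP, rfl⟩ _ ⟨Q, hQ, rfl⟩ a b ha hb hab
  lift a to ℝ≥0 using ha
  lift b to ℝ≥0 using hb
  have hab' : a + b = 1 := mod_cast hab
  obtain ⟨R, hR⟩ := exists_eq_smul_add_smul P Q hab'
  refine ⟨R, hS P hP Q hQ a b hab' R hR, ?_⟩
  simp only [Measure.toSignedMeasure_congr hR, Measure.toSignedMeasure_add,
    Measure.toSignedMeasure_smul]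
  rfl

lemma toSignedMeasure_map_simpleFunc {Ω' : Type*} [MeasurableSpace Ω'] (μ : Measure Ω)
    [IsFiniteMeasure μ] (φ : SimpleFunc Ω Ω') :
    (μ.map φ).toSignedMeasure =
      ∑ y ∈ φ.range, μ.real (φ ⁻¹' {y}) • (Measure.dirac y).toSignedMeasure := by
  classical
  ext A hA
  have hfiber : φ ⁻¹' A = φ ⁻¹' (φ.range.filter (· ∈ A) : Finset Ω') := by
    ext w
    simp
  calc (μ.map φ).toSignedMeasure A
      = μ.real (φ ⁻¹' A) := by
        rw [Measure.toSignedMeasure_apply_measurable hA, map_measureReal_apply φ.measurable hA]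
    _ = ∑ y ∈ φ.range with y ∈ A, μ.real (φ ⁻¹' {y}) := by
        rw [hfiber, sum_measureReal_preimage_singleton _ fun y _ => φ.measurableSet_fiber y]
    _ = (∑ y ∈ φ.range, μ.real (φ ⁻¹' {y}) • (Measure.dirac y).toSignedMeasure) A := by
        simp [Finset.sum_filter, Measure.toSignedMeasure_apply_measurable hA, measureReal_def,
          Measure.dirac_apply' _ hA, indicator_apply, apply_ite]

lemma ConvexMeasSet.map_simpleFunc_mem {Ω' : Type*} [MeasurableSpace Ω']
    {S : Set (ProbabilityMeasure Ω')} (hS : ConvexMeasSet S) (hdirac : ∀ y, diracProba y ∈ S)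
    (P : ProbabilityMeasure Ω) (φ : SimpleFunc Ω Ω') :
    P.map φ.measurable.aemeasurable ∈ S := by
  have hmem : ((P : Measure Ω).map φ).toSignedMeasure ∈
      (fun Q : ProbabilityMeasure Ω' => (Q : Measure Ω').toSignedMeasure) '' S := by
    rw [toSignedMeasure_map_simpleFunc]
    refine hS.convex_image_toSignedMeasure.sum_mem (fun _ _ => measureReal_nonneg) ?_
      fun y _ => ⟨diracProba y, hdirac y, rfl⟩
    rw [sum_measureReal_preimage_singleton _ fun y _ => φ.measurableSet_fiber y, φ.coe_range,
      preimage_range, probReal_univ]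
  obtain ⟨Q, hQ, heq⟩ := hmem
  have hQP : Q = P.map φ.measurable.aemeasurable :=
    Subtype.ext <| (Measure.toSignedMeasure_eq_toSignedMeasure_iff (μ := (Q : Measure Ω'))
      (ν := (P : Measure Ω).map φ)).1 heq
  exact hQP ▸ hQ

variable [TopologicalSpace Ω] [OpensMeasurableSpace Ω]

lemma isAffineFunctional_expect (f : Ω →ᵇ ℝ) : IsAffineFunctional (expect f) := by
  intro P Q a b _ R hR
  simp only [expect]
  rw [hR, integral_add_measure (f.integrable _) (f.integrable _), integral_smul_nnreal_measure,
    integral_smul_nnreal_measure]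
  rfl

lemma tendsto_of_eq_smul_add_smul {P : ProbabilityMeasure Ω} {Q R : ℕ → ProbabilityMeasure Ω}
    {a b : ℕ → ℝ≥0} (hab : ∀ n, a n + b n = 1) (hb : Tendsto b atTop (𝓝 0))
    (hR : ∀ n, (R n : Measure Ω) = a n • (P : Measure Ω) + b n • (Q n : Measure Ω)) :
    Tendsto R atTop (𝓝 P) := by
  rw [ProbabilityMeasure.tendsto_iff_forall_integral_tendsto]
  intro f
  refine tendsto_iff_dist_tendsto_zero.2 <| squeeze_zero (fun _ => dist_nonneg)
    (g := fun n => (b n : ℝ) * (‖f‖ + ‖f‖)) (fun n => ?_) ?_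
  · change |expect f (R n) - expect f P| ≤ b n * (‖f‖ + ‖f‖)
    rw [(isAffineFunctional_expect f).sub_eq (hab n) (hR n), abs_mul, NNReal.abs_eq]
    gcongr
    exact (abs_sub _ _).trans (add_le_add (abs_expect_le_norm f _) (abs_expect_le_norm f _))
  · simpa using (NNReal.tendsto_coe.2 hb).mul_const (‖f‖ + ‖f‖)

lemma IsAffineFunctional.exists_forall_abs_le {η : ProbabilityMeasure Ω → ℝ}
    (hη : IsAffineFunctional η) (hcont : Continuous η) : ∃ M, ∀ Q, |η Q| ≤ M := by
  by_contra! hunbdd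
  obtain ⟨P, -⟩ := hunbdd 0
  choose Q hQ using fun n : ℕ => hunbdd (|η P| + (n + 1))
  let b : ℕ → ℝ≥0 := fun n => 1 / (n + 1)
  have hb : Tendsto b atTop (𝓝 0) := tendsto_one_div_add_atTop_nhds_zero_nat
  have hab : ∀ n, (1 - b n) + b n = 1 := fun n =>
    tsub_add_cancel_of_le (div_le_one_of_le₀ le_add_self zero_le)
  choose R hR using fun n => exists_eq_smul_add_smul P (Q n) (hab n)
  have hlim : Tendsto (fun n => |η (R n) - η P|) atTop (𝓝 0) := by
    have hηR := (hcont.tendsto P).comp (tendsto_of_eq_smul_add_smul hab hb hR)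
    simpa using (hηR.sub_const (η P)).abs
  have hfar : ∀ n, 1 ≤ |η (R n) - η P| := fun n =>
    calc (1 : ℝ) = b n * (n + 1) := by simp [b, Nat.cast_add_one_ne_zero]
      _ ≤ b n * |η (Q n) - η P| := by
        gcongr
        linarith [hQ n, abs_sub_abs_le_abs_sub (η (Q n)) (η P)]
      _ = |η (R n) - η P| := by rw [hη.sub_eq (hab n) (hR n), abs_mul, NNReal.abs_eq]
  exact absurd (ge_of_tendsto' hlim hfar) (by norm_num)

lemma exists_seq_simpleFunc_tendsto_map [PseudoMetrizableSpace Ω] [SecondCountableTopology Ω]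
    (P : ProbabilityMeasure Ω) :
    ∃ φ : ℕ → SimpleFunc Ω Ω,
      Tendsto (fun n => P.map (φ n).measurable.aemeasurable) atTop (𝓝 P) := by
  let _ := pseudoMetrizableSpacePseudoMetric Ω
  obtain ⟨w₀⟩ : Nonempty Ω := P.nonempty
  let φ : ℕ → SimpleFunc Ω Ω := SimpleFunc.approxOn id measurable_id univ w₀ (mem_univ _)
  have hφ : ∀ w, Tendsto (fun n => φ n w) atTop (𝓝 w) := fun w =>
    SimpleFunc.tendsto_approxOn measurable_id (mem_univ w₀) (by simp)
  refine ⟨φ, ProbabilityMeasure.tendsto_iff_forall_integral_tendsto.2 fun f => ?_⟩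
  simp only [ProbabilityMeasure.toMeasure_map,
    integral_map (φ _).measurable.aemeasurable f.continuous.measurable.aestronglyMeasurable]
  exact tendsto_integral_of_dominated_convergence (fun _ => ‖f‖)
    (fun n => (f.continuous.measurable.comp (φ n).measurable).aestronglyMeasurable)
    (integrable_const _) (fun n => .of_forall fun w => f.norm_coe_le_norm _)
    (.of_forall fun w => (f.continuous.tendsto w).comp (hφ w))

lemma ConvexMeasSet.eq_univ_of_isClosed [PseudoMetrizableSpace Ω] [SecondCountableTopology Ω]
    {S : Set (ProbabilityMeasure Ω)} (hS : ConvexMeasSet S) (hclosed : IsClosed S)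
    (hdirac : ∀ w, diracProba w ∈ S) : S = univ := by
  refine eq_univ_of_forall fun P => ?_
  obtain ⟨φ, hφ⟩ := exists_seq_simpleFunc_tendsto_map P
  exact hclosed.mem_of_tendsto hφ (.of_forall fun n => hS.map_simpleFunc_mem hdirac P (φ n))

lemma IsAffineFunctional.exists_eq_expect [PseudoMetrizableSpace Ω] [SecondCountableTopology Ω]
    {η : ProbabilityMeasure Ω → ℝ} (hη : IsAffineFunctional η) (hcont : Continuous η) :
    ∃ g : Ω →ᵇ ℝ, η = expect g := by
  obtain ⟨M, hM⟩ := hη.exists_forall_abs_le hcont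
  let g : Ω →ᵇ ℝ := .ofNormedAddCommGroup (fun w => η (diracProba w))
    (hcont.comp continuous_diracProba) M fun w => hM _
  have hdirac : ∀ w, η (diracProba w) = expect g (diracProba w) := fun w =>
    (integral_dirac' g w g.continuous.stronglyMeasurable).symm
  have huniv := (hη.convexMeasSet_eqLocus (isAffineFunctional_expect g)).eq_univ_of_isClosed
    (isClosed_eq hcont (continuous_expect g)) hdirac
  exact ⟨g, funext (eq_univ_iff_forall.1 huniv)⟩

end AffineFunctionals

section MeasurableMultifunctions

variable {Y Ω : Type*} [MeasurableSpace Y] [TopologicalSpace Ω] [MeasurableSpace Ω]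

/-- Nonempty compact-valued multifunctions into probability measures that are scalarly measurable:
all their support functions are measurable. -/
structure IsMeasurableCompactValued [OpensMeasurableSpace Ω] (C : Y → Set (ProbabilityMeasure Ω)) :
    Prop where
  nonempty : ∀ y, (C y).Nonempty
  isCompact : ∀ y, IsCompact (C y)
  measurable_support : ∀ f, Measurable fun y => support (C y) f

variable {C : Y → Set (ProbabilityMeasure Ω)}

section OpensMeasurableSpace

variable [OpensMeasurableSpace Ω]

namespace IsMeasurableCompactValued

lemma of_measurableSet_inter_nonempty (hne : ∀ y, (C y).Nonempty) (hcpt : ∀ y, IsCompact (C y))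
    (hmeas : ∀ K : Set (ProbabilityMeasure Ω), IsClosed K →
      MeasurableSet {y | (C y ∩ K).Nonempty}) :
    IsMeasurableCompactValued C where
  nonempty := hne
  isCompact := hcpt
  measurable_support f := by
    refine measurable_of_Ici fun a => ?_
    convert hmeas {Q | a ≤ expect f Q} (isClosed_le continuous_const (continuous_expect f)) using 1
    ext y
    constructor
    · intro ha
      obtain ⟨Q, hQ, hval⟩ :=
        (hcpt y).exists_sSup_image_eq (hne y) (continuous_expect f).continuousOn
      exact ⟨Q, hQ, ha.trans_eq hval⟩
    · rintro ⟨Q, hQ, ha⟩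
      exact le_trans ha (expect_le_support (hcpt y) f hQ)

lemma comp {Z : Type*} [MeasurableSpace Z] (hC : IsMeasurableCompactValued C) {φ : Z → Y}
    (hφ : Measurable φ) : IsMeasurableCompactValued fun z => C (φ z) where
  nonempty z := hC.nonempty (φ z)
  isCompact z := hC.isCompact (φ z)
  measurable_support f := (hC.measurable_support f).comp hφ

lemma measurable_penalizedSup (hC : IsMeasurableCompactValued C) (f g : Ω →ᵇ ℝ) (t : ℝ) :
    Measurable fun y => penalizedSup (expect f) (expect g) (C y) t := by
  simp only [penalizedSup_expect]
  exact (hC.measurable_support _).sub ((hC.measurable_support g).const_mul t)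

lemma tendsto_penalizedSup (hC : IsMeasurableCompactValued C) (f g : Ω →ᵇ ℝ) (y : Y) :
    Tendsto (penalizedSup (expect f) (expect g) (C y)) atTop
      (𝓝 (support (Vmax (expect g) (C y)) f)) :=
  tendsto_penalizedSup_atTop (hC.isCompact y) (hC.nonempty y) (continuous_expect f)
    (continuous_expect g)

protected lemma Vmax (hC : IsMeasurableCompactValued C) (g : Ω →ᵇ ℝ) :
    IsMeasurableCompactValued fun y => Vmax (expect g) (C y) where
  nonempty y := Vmax_nonempty (hC.isCompact y) (hC.nonempty y) (continuous_expect g)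
  isCompact y := isCompact_Vmax (hC.isCompact y) (hC.nonempty y) (continuous_expect g)
  measurable_support f := measurable_of_tendsto_metrizable' atTop (hC.measurable_penalizedSup f g)
    (tendsto_pi_nhds.2 (hC.tendsto_penalizedSup f g))

protected lemma iterVmax (hC : IsMeasurableCompactValued C) (F : ℕ → Ω →ᵇ ℝ) (k : ℕ) :
    IsMeasurableCompactValued fun y => iterVmax (fun k => expect (F k)) (C y) k := by
  induction k with
  | zero => exact hC
  | succ k ih => exact ih.Vmax (F k)

lemma integrable_support (hC : IsMeasurableCompactValued C) (μ : Measure Y) [IsFiniteMeasure μ]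
    (f : Ω →ᵇ ℝ) : Integrable (fun y => support (C y) f) μ :=
  .of_bound (hC.measurable_support f).aestronglyMeasurable ‖f‖
    (.of_forall fun y => abs_support_le_norm (hC.isCompact y) (hC.nonempty y) f)

lemma exists_selection_measurable_expect [T2Space (ProbabilityMeasure Ω)]
    (hC : IsMeasurableCompactValued C) {ι : Type*} [Countable ι] [Nonempty ι] (F : ι → Ω →ᵇ ℝ) :
    ∃ q : Y → ProbabilityMeasure Ω, (∀ y, q y ∈ C y) ∧
      ∀ i, Measurable fun y => expect (F i) (q y) := by
  obtain ⟨e, he⟩ := exists_surjective_nat ι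
  have hiter := hC.iterVmax (F ∘ e)
  choose q hq using fun y => nonempty_iInter_iterVmax (hC.isCompact y) (hC.nonempty y)
    fun k => continuous_expect ((F ∘ e) k)
  simp only [mem_iInter] at hq
  refine ⟨q, fun y => hq y 0, fun i => ?_⟩
  obtain ⟨k, rfl⟩ := he i
  -- `q y` maximizes `F (e k)` over the `k`-th iterate, so its value is a support function.
  convert (hiter k).measurable_support (F (e k)) using 2 with y
  have hmax := hq y (k + 1)
  rw [iterVmax, Vmax_eq_sep_eq_sSup ((hiter k).isCompact y) ((hiter k).nonempty y)
    (continuous_expect _)] at hmax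
  exact hmax.2

end IsMeasurableCompactValued

lemma measurable_measure_of_forall_measurable_expect_apprSeq [HasOuterApproxClosed Ω]
    {q : Y → ProbabilityMeasure Ω} {A : Set Ω} (hA : IsClosed A)
    (hq : ∀ n, Measurable fun y =>
      expect ((hA.apprSeq n).comp _ NNReal.isometry_coe.lipschitz) (q y)) :
    Measurable fun y => (q y : Measure Ω) A := by
  refine measurable_of_tendsto_metrizable (fun n => (hq n).ennreal_ofReal)
    (tendsto_pi_nhds.2 fun y => ?_)
  convert HasOuterApproxClosed.tendsto_lintegral_apprSeq hA (q y : Measure Ω) using 2 with n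
  rw [expect, ofReal_integral_eq_lintegral_ofReal (BoundedContinuousFunction.integrable _ _)
    (.of_forall fun w => NNReal.coe_nonneg _)]
  simp

end OpensMeasurableSpace

lemma exists_seq_isClosed_isPiSystem_generateFrom (α : Type*) [TopologicalSpace α]
    [SecondCountableTopology α] :
    ∃ F : ℕ → Set α, (∀ i, IsClosed (F i)) ∧ IsPiSystem (range F) ∧
      borel α = MeasurableSpace.generateFrom (range F) := by
  let B : Set (Set α) := compl '' countableBasis α
  let S : Set (Set α) := sInter '' {T | T.Finite ∧ T ⊆ B}
  have hclosed : ∀ A ∈ S, IsClosed A := by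
    rintro _ ⟨T, hT, rfl⟩
    refine isClosed_sInter fun A hA => ?_
    obtain ⟨U, hU, rfl⟩ := hT.2 hA
    exact (isOpen_of_mem_countableBasis hU).isClosed_compl
  have hcountable : S.Countable :=
    (countable_ofPred_finite_subset ((countable_countableBasis α).image _)).image _
  have hne : S.Nonempty := ⟨_, ∅, ⟨finite_empty, empty_subset _⟩, rfl⟩
  obtain ⟨F, hF⟩ := hcountable.exists_eq_range hne
  refine ⟨F, fun i => hclosed _ (hF ▸ mem_range_self i), hF ▸ ?_, hF ▸ le_antisymm ?_ ?_⟩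
  · rintro _ ⟨T, hT, rfl⟩ _ ⟨T', hT', rfl⟩ -
    exact ⟨T ∪ T', ⟨hT.1.union hT'.1, union_subset hT.2 hT'.2⟩, sInter_union T T'⟩
  · rw [(isBasis_countableBasis α).borel_eq_generateFrom]
    refine MeasurableSpace.generateFrom_le fun U hU => ?_
    have hUc : Uᶜ ∈ S :=
      ⟨{Uᶜ}, ⟨finite_singleton _, singleton_subset_iff.2 ⟨U, hU, rfl⟩⟩, sInter_singleton _⟩
    exact .of_compl (MeasurableSpace.measurableSet_generateFrom hUc)
  · rw [borel_eq_generateFrom_isClosed]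
    exact MeasurableSpace.generateFrom_mono hclosed

lemma IsMeasurableCompactValued.exists_measurable_selection [HasOuterApproxClosed Ω]
    [SecondCountableTopology Ω] [BorelSpace Ω] (hC : IsMeasurableCompactValued C) :
    ∃ q : Y → ProbabilityMeasure Ω, (∀ y, q y ∈ C y) ∧ Measurable fun y => (q y : Measure Ω) := by
  obtain ⟨A, hclosed, hpi, hgen⟩ := exists_seq_isClosed_isPiSystem_generateFrom Ω
  obtain ⟨q, hq, hmeas⟩ := hC.exists_selection_measurable_expect fun i : ℕ × ℕ =>
    ((hclosed i.1).apprSeq i.2).comp _ NNReal.isometry_coe.lipschitz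
  refine ⟨q, hq, .measure_of_isPiSystem_of_isProbabilityMeasure
    (BorelSpace.measurable_eq.trans hgen) hpi (forall_mem_range.2 fun i => ?_)⟩
  exact measurable_measure_of_forall_measurable_expect_apprSeq (hclosed i) fun n => hmeas (i, n)

end MeasurableMultifunctions

section Mixtures

variable {Y Ω : Type*} [MeasurableSpace Y] [TopologicalSpace Ω] [MeasurableSpace Ω]

/-- The measures whose expectations are dominated by the `μ`-average of the support functions of
`C`. For convex-valued `C` these are, by Strassen's theorem, the mixtures `∫ Q_y dμ(y)` with
`Q_y ∈ C y`. The set `K(P, s, C)` is the case `Y = IPath X`, `μ = P` and `w ↦ C (w s)`. -/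
def mixtureSet (μ : Measure Y) (C : Y → Set (ProbabilityMeasure Ω)) :
    Set (ProbabilityMeasure Ω) :=
  {Q | ∀ f : Ω →ᵇ ℝ, expect f Q ≤ ∫ y, support (C y) f ∂μ}

variable {μ : Measure Y} {C D : Y → Set (ProbabilityMeasure Ω)}

section OpensMeasurableSpace

variable [OpensMeasurableSpace Ω]

lemma integral_support_le_expect (hC : IsMeasurableCompactValued C) {g : Ω →ᵇ ℝ}
    {Q : ProbabilityMeasure Ω} (hQ : Q ∈ mixtureSet μ fun y => Vmax (expect g) (C y)) :
    ∫ y, support (C y) g ∂μ ≤ expect g Q := by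
  have hneg := hQ (-g)
  simp only [support_Vmax_neg (hC.isCompact _) (hC.nonempty _), expect_neg, integral_neg] at hneg
  exact neg_le_neg_iff.1 hneg

variable [IsFiniteMeasure μ]

lemma mixtureSet_mono (hC : IsMeasurableCompactValued C) (hD : IsMeasurableCompactValued D)
    (hCD : ∀ y, C y ⊆ D y) :
    mixtureSet μ C ⊆ mixtureSet μ D := fun _ hQ f =>
  (hQ f).trans <| integral_mono (hC.integrable_support μ f) (hD.integrable_support μ f)
    fun y => support_mono (hD.isCompact y) (hC.nonempty y) (hCD y) f

lemma expect_le_integral_penalizedSup (hC : IsMeasurableCompactValued C) {g : Ω →ᵇ ℝ}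
    {Q : ProbabilityMeasure Ω} (hQ : Q ∈ mixtureSet μ C)
    (hg : ∫ y, support (C y) g ∂μ ≤ expect g Q) (f : Ω →ᵇ ℝ) {t : ℝ} (ht : 0 ≤ t) :
    expect f Q ≤ ∫ y, penalizedSup (expect f) (expect g) (C y) t ∂μ := by
  have hfg := hQ (f + t • g)
  rw [expect_add_smul] at hfg
  simp only [penalizedSup_expect]
  rw [integral_sub (hC.integrable_support μ _) ((hC.integrable_support μ g).const_mul t),
    integral_const_mul]
  linarith [mul_le_mul_of_nonneg_left hg ht]

lemma tendsto_integral_penalizedSup (hC : IsMeasurableCompactValued C) (f g : Ω →ᵇ ℝ) :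
    Tendsto (fun t => ∫ y, penalizedSup (expect f) (expect g) (C y) t ∂μ) atTop
      (𝓝 (∫ y, support (Vmax (expect g) (C y)) f ∂μ)) := by
  refine tendsto_integral_filter_of_dominated_convergence (fun _ => ‖f‖)
    (.of_forall fun t => (hC.measurable_penalizedSup f g t).aestronglyMeasurable) ?_
    (integrable_const _) (.of_forall (hC.tendsto_penalizedSup f g))
  filter_upwards [eventually_ge_atTop 0] with t ht
  exact .of_forall fun y => abs_penalizedSup_le (hC.isCompact y) (hC.nonempty y)
    (continuous_expect f) (continuous_expect g) (fun Q _ => abs_expect_le_norm f Q) ht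

lemma mixtureSet_Vmax_eq (hC : IsMeasurableCompactValued C) (g : Ω →ᵇ ℝ) :
    mixtureSet μ (fun y => Vmax (expect g) (C y)) =
      {Q ∈ mixtureSet μ C | expect g Q = ∫ y, support (C y) g ∂μ} := by
  ext Q
  constructor
  · intro hQ
    have hQC := mixtureSet_mono (hC.Vmax g) hC (fun y => Vmax_subset _ _) hQ
    exact ⟨hQC, (hQC g).antisymm (integral_support_le_expect hC hQ)⟩
  · rintro ⟨hQC, hg⟩ f
    refine ge_of_tendsto (tendsto_integral_penalizedSup hC f g) ?_
    filter_upwards [eventually_ge_atTop 0] with t ht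
    exact expect_le_integral_penalizedSup hC hQC hg.ge f ht

end OpensMeasurableSpace

variable [HasOuterApproxClosed Ω] [SecondCountableTopology Ω] [BorelSpace Ω]
  [IsProbabilityMeasure μ]

lemma IsMeasurableCompactValued.mixtureSet_nonempty (hC : IsMeasurableCompactValued C) :
    (mixtureSet μ C).Nonempty := by
  obtain ⟨q, hq, hmeas⟩ := hC.exists_measurable_selection
  let κ : Kernel Y Ω := ⟨fun y => q y, hmeas⟩
  have : IsMarkovKernel κ := ⟨fun y => (q y).2⟩
  refine ⟨⟨(κ ∘ₖ Kernel.const Unit μ) (), inferInstance⟩, fun f => ?_⟩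
  have hf : Integrable f ((κ ∘ₖ Kernel.const Unit μ) ()) := f.integrable _
  calc expect f ⟨(κ ∘ₖ Kernel.const Unit μ) (), _⟩
      = ∫ y, expect f (q y) ∂μ := Kernel.integral_comp hf
    _ ≤ ∫ y, support (C y) f ∂μ := integral_mono hf.integral_comp (hC.integrable_support μ f)
        fun y => expect_le_support (hC.isCompact y) f (hq y)

lemma isGreatest_integral_support (hC : IsMeasurableCompactValued C) (g : Ω →ᵇ ℝ) :
    IsGreatest (expect g '' mixtureSet μ C) (∫ y, support (C y) g ∂μ) := by
  obtain ⟨Q, hQ⟩ := (hC.Vmax g).mixtureSet_nonempty (μ := μ)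
  rw [mixtureSet_Vmax_eq hC g] at hQ
  exact ⟨⟨Q, hQ⟩, forall_mem_image.2 fun R hR => hR g⟩

end Mixtures

theorem Vmax_Kset_comm_general {Y Ω : Type*} [MeasurableSpace Y] [TopologicalSpace Ω]
    [PseudoMetrizableSpace Ω] [SecondCountableTopology Ω] [MeasurableSpace Ω] [BorelSpace Ω]
    {μ : Measure Y} [IsProbabilityMeasure μ] {C : Y → Set (ProbabilityMeasure Ω)}
    (hC : IsMeasurableCompactValued C) {η : ProbabilityMeasure Ω → ℝ} (hηcont : Continuous η)
    (hηaff : IsAffineFunctional η) :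
    Vmax η (mixtureSet μ C) = mixtureSet μ fun y => Vmax η (C y) := by
  obtain ⟨g, rfl⟩ := hηaff.exists_eq_expect hηcont
  rw [mixtureSet_Vmax_eq hC g, Vmax_eq_of_isGreatest (isGreatest_integral_support hC g)]

/-- **The maximization operation commutes with `K(P, s, ·)`:**
`V_η[K(P, s, 𝒞)] = K(P, s, V_η[𝒞])` for every continuous linear functional `η`
on the space of probability measures. -/
theorem Vmax_Kset_comm
    {X : Type*} [TopologicalSpace X] [PolishSpace X] [MeasurableSpace X] [BorelSpace X]
    (C : X → Set (ProbabilityMeasure (IPath X)))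
    (hC1 : ∀ x, (C x).Nonempty ∧ IsCompact (C x) ∧ ConvexMeasSet (C x))
    (hC2 : ∀ K : Set (ProbabilityMeasure (IPath X)), IsClosed K →
      MeasurableSet {x | (C x ∩ K).Nonempty})
    (η : ProbabilityMeasure (IPath X) → ℝ)
    (hηcont : Continuous η)
    (hηlin : ∀ P Q : ProbabilityMeasure (IPath X), ∀ a b : ℝ≥0, a + b = 1 →
      ∀ R : ProbabilityMeasure (IPath X),
        (R : Measure (IPath X)) = a • (P : Measure (IPath X)) + b • (Q : Measure (IPath X)) →
          η R = (a : ℝ) * η P + (b : ℝ) * η Q)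
    (P : ProbabilityMeasure (IPath X)) (s : ℝ≥0) :
    Vmax η (Kset C P s) = Kset (fun x => Vmax η (C x)) P s := by
  have hC : IsMeasurableCompactValued C :=
    .of_measurableSet_inter_nonempty (fun x => (hC1 x).1) (fun x => (hC1 x).2.1) hC2
  exact Vmax_Kset_comm_general (hC.comp (continuous_eval_const s).measurable) hηcont hηlin
end
end
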